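/- arXiv:1404.2298 — 3 statements merged into one kernel-verified Lean document; each statement's English description precedes it below -/
import Mathlib

section
/- Let d ≥ 2 and ε ∈ (0, 1/2]. Let N_{2ε} denote the maximal number N of points x₁,…,x_N on the Euclidean unit sphere in ℝ^d with pairwise distances ‖xⱼ - x_k‖ > 2ε. Then N_{2ε} ≥ (2π)^{1/2}(d-1)^{1/2} · ε^{-(d-1)} / (3^{1/2}·2^{d-1}) and N_{2ε} ≤ 4^{d-1}·π·(d-1)^{1/2} · ε^{-(d-1)} / 15^{(d-1)/2}. -/
/-!
Volume comparison on the sphere reduces both bounds to estimates for the area of a cap. The cone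
over a cap with chordal radius `δ` contains a bicone with base at height `1 - δ ^ 2 / 2` and apex
on the sphere, and is contained in the bicone obtained by moving the apex to the point where the
tangents at the rim meet. Slicing parallel to the axis shows that the volume of a bicone depends
only on the base radius and on the height of the apex, so the base height drops out, and one needs
only the ratio of the volumes of the unit balls in consecutive dimensions, which log-convexity of
`Gamma` controls. The lower packing bound uses caps of radius `2 * ε` around a maximal packing,
which cover the sphere; the upper one uses the disjoint caps of radius `ε`.
-/

open MeasureTheory Metric Module Set
open Real hiding volume_ball
open scoped Pointwise

noncomputable section
namespace SpherePacking

section GammaRatio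

lemma sqrt_mul_Gamma_add_half_le {a : ℝ} (ha : 0 < a) :
    √a * Gamma (a + 1 / 2) ≤ Gamma (a + 1) := by
  have hΓ : 0 < Gamma a := Gamma_pos_of_pos ha
  have hmid : Gamma (a + 1 / 2) ≤ √(Gamma a * Gamma (a + 1)) := by
    convert! Gamma_mul_add_mul_le_rpow_Gamma_mul_rpow_Gamma ha (add_pos ha one_pos)
      one_half_pos one_half_pos (add_halves 1) using 1
    · ring_nf
    · rw [← mul_rpow hΓ.le (by positivity), sqrt_eq_rpow]
  calc √a * Gamma (a + 1 / 2)
      ≤ √a * √(Gamma a * Gamma (a + 1)) := by gcongr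
    _ = √(Gamma (a + 1) ^ 2) := by
        rw [← sqrt_mul ha.le, ← mul_assoc, ← Gamma_add_one ha.ne', sq]
    _ = Gamma (a + 1) := sqrt_sq (Gamma_nonneg_of_nonneg (by positivity))

/-- The volume of the unit ball of an `n`-dimensional Euclidean space, in closed form; see
`volume_real_unitBall`. -/
def unitBallVolume (n : ℕ) : ℝ := √π ^ n / Gamma (n / 2 + 1)

lemma unitBallVolume_pos (n : ℕ) : 0 < unitBallVolume n :=
  div_pos (pow_pos (sqrt_pos.2 pi_pos) n) (Gamma_pos_of_pos (by positivity))

lemma succ_mul_unitBallVolume_succ (n : ℕ) :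
    (n + 1) * unitBallVolume (n + 1) =
      2 * √π * (Gamma (n / 2 + 1) / Gamma ((n + 1) / 2)) * unitBallVolume n := by
  rw [unitBallVolume, unitBallVolume, Nat.cast_succ, pow_succ,
    Gamma_add_one (by positivity)]
  field_simp

lemma sqrt_mul_unitBallVolume_le {n : ℕ} (hn : 0 < n) :
    √(2 * π) * √n * unitBallVolume n ≤ (n + 1) * unitBallVolume (n + 1) := by
  have hΓ : 0 < Gamma (((n : ℝ) + 1) / 2) := Gamma_pos_of_pos (by positivity)
  have hratio : √(n / 2) ≤ Gamma (n / 2 + 1) / Gamma ((n + 1) / 2) := by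
    rw [le_div_iff₀ hΓ, add_div]
    exact sqrt_mul_Gamma_add_half_le (by positivity)
  rw [succ_mul_unitBallVolume_succ]
  refine mul_le_mul_of_nonneg_right ?_ (unitBallVolume_pos n).le
  calc √(2 * π) * √n = √(2 ^ 2 * π * (n / 2)) := by
        rw [← sqrt_mul (by positivity)]
        ring_nf
    _ = 2 * √π * √(n / 2) := by
        rw [sqrt_mul (by positivity), sqrt_mul (by positivity), sqrt_sq zero_le_two]
    _ ≤ _ := by gcongr

lemma Gamma_div_Gamma_le (n : ℕ) :
    Gamma (n / 2 + 1) / Gamma ((n + 1) / 2) ≤ √((n + 1) / 2) := by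
  have ha : (0 : ℝ) < (n + 1) / 2 := by positivity
  have hΓ : 0 < Gamma (((n : ℝ) + 1) / 2) := Gamma_pos_of_pos ha
  have hlog := sqrt_mul_Gamma_add_half_le ha
  rw [Gamma_add_one ha.ne', ← add_div, add_assoc, one_add_one_eq_two, add_div (n : ℝ) 2,
    div_self two_ne_zero] at hlog
  rw [div_le_iff₀ hΓ]
  refine le_of_mul_le_mul_left ?_ (sqrt_pos.2 ha)
  rwa [← mul_assoc, mul_self_sqrt ha.le]

lemma unitBallVolume_succ_le {n : ℕ} (hn : 0 < n) :
    (n + 1) * unitBallVolume (n + 1) ≤ π * √n * unitBallVolume n := by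
  rw [succ_mul_unitBallVolume_succ]
  refine mul_le_mul_of_nonneg_right ?_ (unitBallVolume_pos n).le
  obtain rfl | hn₂ : n = 1 ∨ 2 ≤ n := by lia
  · have hΓ : Gamma ((1 : ℕ) / 2 + 1) / Gamma (((1 : ℕ) + 1) / 2) = √π / 2 := by
      rw [Nat.cast_one, Gamma_add_one (by norm_num), Gamma_one_half_eq]
      norm_num
      ring
    rw [hΓ, Nat.cast_one, sqrt_one]
    linarith [mul_self_sqrt pi_nonneg]
  · have hn₂' : (2 : ℝ) ≤ n := mod_cast hn₂
    calc 2 * √π * (Gamma (n / 2 + 1) / Gamma ((n + 1) / 2))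
        ≤ 2 * √π * √((n + 1) / 2) := by gcongr; exact Gamma_div_Gamma_le n
      _ ≤ π * √n := by
        refine le_of_sq_le_sq ?_ (by positivity)
        rw [mul_pow, mul_pow, mul_pow, sq_sqrt pi_nonneg, sq_sqrt (by positivity),
          sq_sqrt (by positivity)]
        have hlin : 2 * (n + 1) ≤ π * n := by nlinarith [pi_gt_three]
        linarith [mul_le_mul_of_nonneg_left hlin pi_nonneg]

end GammaRatio

section Bicone

variable {F : Type*} [NormedAddCommGroup F]

/-- The solid in `ℝ × F` swept by rotating about the first axis the triangle with vertices
`(0, 0)`, `(h, 0)` and `(c, s)`: two cones with apices at heights `0` and `h`, glued along the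
disc of radius `s` at height `c`. The part of the boundary adjacent to the apex `h` is excluded. -/
def bicone (F : Type*) [NormedAddCommGroup F] (c s h : ℝ) : Set (ℝ × F) :=
  {p | c * ‖p.2‖ ≤ s * p.1 ∧ s * p.1 + (h - c) * ‖p.2‖ < s * h}

lemma measurableSet_bicone [MeasurableSpace F] [OpensMeasurableSpace F] (c s h : ℝ) :
    MeasurableSet (bicone F c s h) := by
  unfold bicone
  measurability

lemma bicone_section {s : ℝ} (hs : 0 < s) (c h : ℝ) (y : F) :
    (fun t : ℝ ↦ (t, y)) ⁻¹' bicone F c s h =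
      Ico (c * ‖y‖ / s) (h - (h - c) * ‖y‖ / s) := by
  ext t
  rw [mem_Ico, div_le_iff₀ hs, lt_sub_iff_add_lt, ← mul_lt_mul_iff_of_pos_left hs]
  simp only [bicone, mem_preimage, mem_ofPred_eq]
  field_simp

lemma integral_max_one_sub_norm [NormedSpace ℝ F] [Nontrivial F] [FiniteDimensional ℝ F]
    [MeasurableSpace F] [BorelSpace F] (μ : Measure F) [μ.IsAddHaarMeasure] :
    ∫ y, max (1 - ‖y‖) 0 ∂μ = μ.real (ball 0 1) / (finrank ℝ F + 1) := by
  obtain ⟨m, hm⟩ : ∃ m, finrank ℝ F = m + 1 :=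
    Nat.exists_eq_add_one_of_ne_zero finrank_pos.ne'
  have hvanish : ∀ r ∈ Ioi (0 : ℝ) \ Ioc 0 1, r ^ m * max (1 - r) 0 = 0 := by
    rintro r ⟨hr₀, hr⟩
    rw [max_eq_right, mul_zero]
    grind
  have hradial : ∫ r in Ioi (0 : ℝ), r ^ m * max (1 - r) 0 = 1 / (m + 1) - 1 / (m + 2) := by
    calc ∫ r in Ioi (0 : ℝ), r ^ m * max (1 - r) 0
        = ∫ r in Ioc (0 : ℝ) 1, r ^ m * max (1 - r) 0 :=
          setIntegral_eq_of_subset_of_forall_sdiff_eq_zero measurableSet_Ioi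
            Ioc_subset_Ioi_self hvanish
      _ = ∫ r in (0 : ℝ)..1, (r ^ m - r ^ (m + 1)) := by
          rw [intervalIntegral.integral_of_le zero_le_one]
          refine setIntegral_congr_fun measurableSet_Ioc fun r hr ↦ ?_
          simp only [max_eq_left (sub_nonneg.2 hr.2)]
          ring
      _ = 1 / (m + 1) - 1 / (m + 2) := by
          rw [intervalIntegral.integral_sub (by simp) (by simp)]
          simp [add_assoc, one_add_one_eq_two]
  rw [integral_fun_norm_addHaar μ fun r ↦ max (1 - r) 0]
  simp only [hm, Nat.add_sub_cancel, smul_eq_mul, nsmul_eq_mul, hradial]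
  push_cast
  field_simp
  ring

lemma lintegral_ofReal_mul_one_sub_norm_div [NormedSpace ℝ F] [Nontrivial F]
    [FiniteDimensional ℝ F] [MeasurableSpace F] [BorelSpace F] (μ : Measure F)
    [μ.IsAddHaarMeasure] {s h : ℝ} (hs : 0 < s) (hh : 0 ≤ h) :
    ∫⁻ y, ENNReal.ofReal (h * (1 - ‖y‖ / s)) ∂μ =
      ENNReal.ofReal (μ.real (ball 0 1) * s ^ finrank ℝ F * h / (finrank ℝ F + 1)) := by
  have hint : Integrable (fun y : F ↦ max (1 - ‖y‖) 0) μ := by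
    refine Continuous.integrable_of_hasCompactSupport (by fun_prop)
      (.intro (isCompact_closedBall 0 1) fun y hy ↦ max_eq_right ?_)
    simp only [mem_closedBall, dist_zero_right, not_le] at hy
    linarith
  have hmax : ∀ y : F, ENNReal.ofReal (h * (1 - ‖y‖ / s)) =
      ENNReal.ofReal (h * max (1 - ‖s⁻¹ • y‖) 0) := fun y ↦ by
    rw [norm_smul_of_nonneg (by positivity), inv_mul_eq_div, ENNReal.ofReal_mul hh,
      ENNReal.ofReal_mul hh, ENNReal.ofReal_max, ENNReal.ofReal_zero, max_eq_left zero_le]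
  simp_rw [hmax]
  rw [← ofReal_integral_eq_lintegral_ofReal ((hint.comp_smul (inv_ne_zero hs.ne')).const_mul h)
      (.of_forall fun y ↦ mul_nonneg hh (le_max_right _ _)), integral_const_mul,
    Measure.integral_comp_inv_smul_of_nonneg μ (fun y ↦ max (1 - ‖y‖) 0) hs.le,
    integral_max_one_sub_norm, smul_eq_mul]
  ring_nf

lemma prod_bicone [NormedSpace ℝ F] [Nontrivial F] [FiniteDimensional ℝ F] [MeasurableSpace F]
    [BorelSpace F] (μ : Measure F) [μ.IsAddHaarMeasure] {s h : ℝ} (hs : 0 < s) (hh : 0 ≤ h)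
    (c : ℝ) :
    (volume.prod μ) (bicone F c s h) =
      ENNReal.ofReal (μ.real (ball 0 1) * s ^ finrank ℝ F * h / (finrank ℝ F + 1)) := by
  rw [Measure.prod_apply_symm (measurableSet_bicone c s h),
    ← lintegral_ofReal_mul_one_sub_norm_div μ hs hh]
  refine lintegral_congr fun y ↦ ?_
  rw [bicone_section hs, Real.volume_Ico]
  ring_nf

variable {c s ρ : ℝ} {p : ℝ × F}

lemma mem_sector_of_mem_bicone (hc : 0 ≤ c) (hs : 0 < s) (hcs : c ^ 2 + s ^ 2 = 1)
    (hp : ρ ^ 2 = p.1 ^ 2 + ‖p.2‖ ^ 2) (hmem : p ∈ bicone F c s 1) :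
    c * ρ ≤ p.1 ∧ ρ < 1 := by
  obtain ⟨t, y⟩ := p
  obtain ⟨hlow, hupp⟩ := hmem
  dsimp only at hp hlow hupp ⊢
  have hr : 0 ≤ ‖y‖ := norm_nonneg y
  have ht : 0 ≤ t := nonneg_of_mul_nonneg_right ((mul_nonneg hc hr).trans hlow) hs
  have hc₁ : c < 1 := by nlinarith
  constructor
  · refine le_of_sq_le_sq ?_ ht
    have hlow_sq : (c * ‖y‖) ^ 2 ≤ (s * t) ^ 2 := by gcongr
    calc (c * ρ) ^ 2 = c ^ 2 * t ^ 2 + (c * ‖y‖) ^ 2 := by rw [mul_pow, hp]; ring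
      _ ≤ c ^ 2 * t ^ 2 + (s * t) ^ 2 := by gcongr
      _ = (c ^ 2 + s ^ 2) * t ^ 2 := by ring
      _ = t ^ 2 := by rw [hcs, one_mul]
  · have hys : 0 ≤ s - ‖y‖ := by linarith
    have hupp_sq : (s * t) ^ 2 < (s - (1 - c) * ‖y‖) ^ 2 := by
      gcongr
      linarith
    have hsρ : (s * ρ) ^ 2 < s ^ 2 := by
      calc (s * ρ) ^ 2 = (s * t) ^ 2 + s ^ 2 * ‖y‖ ^ 2 := by rw [mul_pow, hp]; ring
        _ < (s - (1 - c) * ‖y‖) ^ 2 + s ^ 2 * ‖y‖ ^ 2 := by gcongr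
        _ = s ^ 2 - 2 * ((1 - c) * (‖y‖ * (s - ‖y‖))) := by
          linear_combination ‖y‖ ^ 2 * hcs
        _ ≤ s ^ 2 := sub_le_self _ (by have := sub_pos.2 hc₁; positivity)
    exact (mul_lt_iff_lt_one_right hs).1 (lt_of_pow_lt_pow_left₀ 2 hs.le hsρ)

lemma mem_bicone_of_mem_sector (hc : 0 < c) (hs : 0 < s) (hcs : c ^ 2 + s ^ 2 = 1)
    (hρ : 0 ≤ ρ) (hp : ρ ^ 2 = p.1 ^ 2 + ‖p.2‖ ^ 2) (hlow : c * ρ ≤ p.1) (hupp : ρ < 1) :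
    p ∈ bicone F c s c⁻¹ := by
  obtain ⟨t, y⟩ := p
  dsimp only at hp hlow
  have ht : 0 ≤ t := (mul_nonneg hc.le hρ).trans hlow
  constructor
  · refine le_of_sq_le_sq ?_ (by positivity)
    have hlow_sq : (c * ρ) ^ 2 ≤ t ^ 2 := by gcongr
    rw [mul_pow, hp] at hlow_sq
    linear_combination hlow_sq - t ^ 2 * hcs
  · have hsupport : c * t + s * ‖y‖ < 1 := by
      refine lt_of_le_of_lt (le_of_sq_le_sq ?_ hρ) hupp
      calc (c * t + s * ‖y‖) ^ 2
          = (c ^ 2 + s ^ 2) * (t ^ 2 + ‖y‖ ^ 2) - (s * t - c * ‖y‖) ^ 2 := by ring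
        _ ≤ ρ ^ 2 := by rw [hcs, hp, one_mul]; exact sub_le_self _ (sq_nonneg _)
    have hslope : c⁻¹ - c = s ^ 2 / c := by
      rw [eq_div_iff hc.ne', sub_mul, inv_mul_cancel₀ hc.ne']
      linear_combination -hcs
    calc s * t + (c⁻¹ - c) * ‖y‖ = s * c⁻¹ * (c * t + s * ‖y‖) := by
          rw [hslope]
          field_simp
      _ < s * c⁻¹ * 1 := by gcongr
      _ = s * c⁻¹ := mul_one _

end Bicone

section Cap

variable {E : Type*} [NormedAddCommGroup E] [InnerProductSpace ℝ E]

/-- The cap of the unit sphere with centre `u` and angular radius `arccos c`. -/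
def sphericalCap (u : sphere (0 : E) 1) (c : ℝ) : Set (sphere (0 : E) 1) :=
  {v | c ≤ inner ℝ (u : E) v}

lemma closedBall_eq_sphericalCap (u : sphere (0 : E) 1) {δ : ℝ} (hδ : 0 ≤ δ) :
    closedBall u δ = sphericalCap u (1 - δ ^ 2 / 2) := by
  ext v
  rw [mem_closedBall, Subtype.dist_eq, dist_eq_norm, ← sq_le_sq₀ (norm_nonneg _) hδ,
    norm_sub_sq_real, norm_eq_of_mem_sphere, norm_eq_of_mem_sphere, real_inner_comm]
  simp only [sphericalCap, mem_ofPred_eq]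
  constructor <;> intro h <;> linarith

lemma mem_Ioo_smul_sphericalCap {u : sphere (0 : E) 1} {c : ℝ} {x : E} :
    x ∈ Ioo (0 : ℝ) 1 • ((↑) '' sphericalCap u c : Set E) ↔
      x ≠ 0 ∧ c * ‖x‖ ≤ inner ℝ (u : E) x ∧ ‖x‖ < 1 := by
  constructor
  · rintro ⟨r, ⟨hr₀, hr₁⟩, _, ⟨v, hv, rfl⟩, rfl⟩
    have hnorm : ‖r • (v : E)‖ = r := by
      rw [norm_smul_of_nonneg hr₀.le, norm_eq_of_mem_sphere, mul_one]
    refine ⟨smul_ne_zero hr₀.ne' (ne_zero_of_mem_unit_sphere v), ?_, hnorm.trans_lt hr₁⟩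
    rw [hnorm, inner_smul_right, mul_comm]
    exact mul_le_mul_of_nonneg_left hv hr₀.le
  · rintro ⟨hx₀, hcap, hx₁⟩
    have hpos : 0 < ‖x‖ := norm_pos_iff.2 hx₀
    refine ⟨‖x‖, ⟨hpos, hx₁⟩, ‖x‖⁻¹ • x, ⟨⟨‖x‖⁻¹ • x, ?_⟩, ?_, rfl⟩, smul_inv_smul₀ hpos.ne' x⟩
    · rw [mem_sphere_zero_iff_norm, norm_smul_of_nonneg (by positivity),
        inv_mul_cancel₀ hpos.ne']
    · rwa [sphericalCap, mem_ofPred_eq, inner_smul_right, inv_mul_eq_div, le_div_iff₀ hpos]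

lemma measurableSet_sphericalCap [MeasurableSpace E] [OpensMeasurableSpace E]
    (u : sphere (0 : E) 1) (c : ℝ) : MeasurableSet (sphericalCap u c) :=
  (isClosed_le continuous_const (by fun_prop)).measurableSet

lemma toSphere_real_sphericalCap [MeasurableSpace E] [BorelSpace E] (μ : Measure E)
    (u : sphere (0 : E) 1) (c : ℝ) :
    μ.toSphere.real (sphericalCap u c) =
      finrank ℝ E * μ.real (Ioo (0 : ℝ) 1 • ((↑) '' sphericalCap u c : Set E)) := by
  rw [measureReal_def, Measure.toSphere_apply' _ (measurableSet_sphericalCap u c),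
    ENNReal.toReal_mul, ENNReal.toReal_natCast, measureReal_def]

/-- Coordinates of `x` along the axis spanned by `u` and in the orthogonal hyperplane. -/
def axialCoords (u : sphere (0 : E) 1) (x : E) : ℝ × (ℝ ∙ (u : E))ᗮ :=
  (inner ℝ (u : E) x, (ℝ ∙ (u : E))ᗮ.orthogonalProjectionOnto x)

lemma toSpanUnitSingleton_symm_orthogonalProjectionOnto {u : E} (hu : ‖u‖ = 1) (x : E) :
    (LinearIsometryEquiv.toSpanUnitSingleton u hu).symm ((ℝ ∙ u).orthogonalProjectionOnto x) =
      inner ℝ u x := by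
  rw [LinearIsometryEquiv.symm_apply_eq]
  exact Subtype.ext (Submodule.starProjection_unit_singleton ℝ hu x)

lemma norm_sq_eq_axialCoords (u : sphere (0 : E) 1) (x : E) :
    ‖x‖ ^ 2 = (axialCoords u x).1 ^ 2 + ‖(axialCoords u x).2‖ ^ 2 := by
  rw [Submodule.norm_sq_eq_add_norm_sq_projection x (ℝ ∙ (u : E)),
    ← LinearIsometryEquiv.norm_map
      (LinearIsometryEquiv.toSpanUnitSingleton (u : E) (norm_eq_of_mem_sphere u)).symm,
    toSpanUnitSingleton_symm_orthogonalProjectionOnto, norm_eq_abs, sq_abs, axialCoords]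

variable [FiniteDimensional ℝ E] [MeasurableSpace E] [BorelSpace E]

lemma measurePreserving_axialCoords (u : sphere (0 : E) 1) :
    MeasurePreserving (axialCoords u) := by
  let axis := LinearIsometryEquiv.toSpanUnitSingleton (𝕜 := ℝ) (u : E) (norm_eq_of_mem_sphere u)
  have h := (axis.symm.measurePreserving.prod (.id volume)).comp
    ((WithLp.volume_preserving_ofLp _ _).comp
      (ℝ ∙ (u : E)).orthogonalDecomposition.measurePreserving)
  convert! h using 1
  ext x
  · exact (toSpanUnitSingleton_symm_orthogonalProjectionOnto (norm_eq_of_mem_sphere u) x).symm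
  · simp [axialCoords]

lemma volume_real_unitBall [Nontrivial E] :
    volume.real (ball (0 : E) 1) = unitBallVolume (finrank ℝ E) := by
  rw [measureReal_def, InnerProductSpace.volume_ball, ENNReal.ofReal_one, one_pow, one_mul]
  exact ENNReal.toReal_ofReal (unitBallVolume_pos _).le

lemma volume_real_preimage_bicone {n : ℕ} (hn : 0 < n) (hE : finrank ℝ E = n + 1)
    (u : sphere (0 : E) 1) {s h : ℝ} (hs : 0 < s) (hh : 0 ≤ h) (c : ℝ) :
    volume.real (axialCoords u ⁻¹' bicone _ c s h) = unitBallVolume n * s ^ n * h / (n + 1) := by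
  have : Fact (finrank ℝ E = n + 1) := ⟨hE⟩
  have hfinrank : finrank ℝ (ℝ ∙ (u : E))ᗮ = n :=
    Submodule.finrank_orthogonal_span_singleton (ne_zero_of_mem_unit_sphere u)
  have : Nontrivial (ℝ ∙ (u : E))ᗮ := nontrivial_of_finrank_pos (R := ℝ) (by lia)
  have := unitBallVolume_pos n
  rw [(measurePreserving_axialCoords u).measureReal_preimage
      (measurableSet_bicone c s h).nullMeasurableSet, Measure.volume_eq_prod, measureReal_def,
    prod_bicone volume hs hh, volume_real_unitBall, hfinrank, ENNReal.toReal_ofReal (by positivity)]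

variable {n : ℕ} {c s : ℝ}

lemma le_toSphere_real_sphericalCap (hn : 0 < n) (hE : finrank ℝ E = n + 1) (hc : 0 ≤ c)
    (hs : 0 < s) (hcs : c ^ 2 + s ^ 2 = 1) (u : sphere (0 : E) 1) :
    unitBallVolume n * s ^ n ≤ (volume : Measure E).toSphere.real (sphericalCap u c) := by
  have hinscribed : axialCoords u ⁻¹' bicone _ c s 1 \ {0} ⊆
      Ioo (0 : ℝ) 1 • ((↑) '' sphericalCap u c : Set E) := fun x ⟨hx, hx₀⟩ ↦
    mem_Ioo_smul_sphericalCap.2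
      ⟨hx₀, mem_sector_of_mem_bicone hc hs hcs (norm_sq_eq_axialCoords u x) hx⟩
  have hfinite : volume (Ioo (0 : ℝ) 1 • ((↑) '' sphericalCap u c : Set E)) ≠ ⊤ :=
    ne_top_of_le_ne_top measure_ball_lt_top.ne
      (measure_mono fun x hx ↦ mem_ball_zero_iff.2 (mem_Ioo_smul_sphericalCap.1 hx).2.2)
  have hvolume := measureReal_mono hinscribed hfinite
  have : Nontrivial E := nontrivial_of_finrank_pos (R := ℝ) (by lia)
  rw [measureReal_def, measure_sdiff_null (measure_singleton 0), ← measureReal_def,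
    volume_real_preimage_bicone hn hE u hs zero_le_one, mul_one] at hvolume
  rw [toSphere_real_sphericalCap, hE, Nat.cast_succ]
  exact (div_le_iff₀' (by positivity)).1 hvolume

lemma toSphere_real_sphericalCap_le (hn : 0 < n) (hE : finrank ℝ E = n + 1) (hc : 0 < c)
    (hs : 0 < s) (hcs : c ^ 2 + s ^ 2 = 1) (u : sphere (0 : E) 1) :
    (volume : Measure E).toSphere.real (sphericalCap u c) ≤ unitBallVolume n * s ^ n / c := by
  have hcircumscribed : Ioo (0 : ℝ) 1 • ((↑) '' sphericalCap u c : Set E) ⊆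
      axialCoords u ⁻¹' bicone _ c s c⁻¹ := fun x hx ↦
    have ⟨_, hlow, hupp⟩ := mem_Ioo_smul_sphericalCap.1 hx
    mem_bicone_of_mem_sector hc hs hcs (norm_nonneg x) (norm_sq_eq_axialCoords u x) hlow hupp
  have hv := unitBallVolume_pos n
  have hvolume := volume_real_preimage_bicone hn hE u hs (inv_nonneg.2 hc.le) c
  have hpos : 0 < volume.real (axialCoords u ⁻¹' bicone _ c s c⁻¹) := by
    rw [hvolume]
    positivity
  rw [toSphere_real_sphericalCap, hE, Nat.cast_succ, div_eq_mul_inv]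
  have hfinite : volume (axialCoords u ⁻¹' bicone _ c s c⁻¹) ≠ ⊤ := fun htop ↦ hpos.ne' <| by
    rw [measureReal_def, htop, ENNReal.toReal_top]
  exact (le_div_iff₀' (by positivity)).1 (hvolume ▸ measureReal_mono hcircumscribed hfinite)

end Cap

section Packing

variable {X : Type*} [PseudoMetricSpace X]

lemma exists_dist_le_of_maximal {N : ℕ} {r : ℝ} {x : Fin N → X}
    (hsep : Pairwise fun i j ↦ r < dist (x i) (x j))
    (hmax : ∀ y : Fin (N + 1) → X, ¬ Pairwise fun i j ↦ r < dist (y i) (y j)) (u : X) :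
    ∃ i, dist u (x i) ≤ r := by
  by_contra! hfar
  refine hmax (Fin.cons u x) fun i j hij ↦ ?_
  cases i using Fin.cases with
  | zero =>
    cases j using Fin.cases with
    | zero => exact absurd rfl hij
    | succ j => exact hfar j
  | succ i =>
    cases j using Fin.cases with
    | zero => exact dist_comm u (x i) ▸ hfar i
    | succ j => exact hsep (ne_of_apply_ne Fin.succ hij)

variable [MeasurableSpace X] {ι : Type*} [Fintype ι] {μ : Measure X}
  {x : ι → X} {r m : ℝ}

lemma card_mul_le_measureReal_univ [OpensMeasurableSpace X] [IsFiniteMeasure μ]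
    (hsep : Pairwise fun i j ↦ 2 * r < dist (x i) (x j))
    (hball : ∀ i, m ≤ μ.real (closedBall (x i) r)) :
    Fintype.card ι * m ≤ μ.real univ := by
  have hdisj : Pairwise (Function.onFun Disjoint fun i ↦ closedBall (x i) r) := fun i j hij ↦
    closedBall_disjoint_closedBall (by linarith [hsep hij])
  calc Fintype.card ι * m = ∑ _i : ι, m := by simp
    _ ≤ ∑ i, μ.real (closedBall (x i) r) := Finset.sum_le_sum fun i _ ↦ hball i
    _ = μ.real (⋃ i, closedBall (x i) r) :=
      (measureReal_iUnion_fintype hdisj fun i ↦ measurableSet_closedBall).symm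
    _ ≤ μ.real univ := measureReal_mono (subset_univ _)

lemma measureReal_univ_le_card_mul (hcover : ∀ u, ∃ i, dist u (x i) ≤ r)
    (hball : ∀ i, μ.real (closedBall (x i) r) ≤ m) :
    μ.real univ ≤ Fintype.card ι * m := by
  calc μ.real univ = μ.real (⋃ i, closedBall (x i) r) := by
        have hunion : ⋃ i, closedBall (x i) r = univ := iUnion_eq_univ_iff.2 hcover
        rw [hunion]
    _ ≤ ∑ i, μ.real (closedBall (x i) r) := measureReal_iUnion_fintype_le _
    _ ≤ ∑ _i : ι, m := Finset.sum_le_sum fun i _ ↦ hball i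
    _ = Fintype.card ι * m := by simp

end Packing

section Sphere

lemma sqrt_fifteen_le_four_mul_sqrt {ε : ℝ} (hε : ε ^ 2 ≤ 1 / 4) : √15 ≤ 4 * √(1 - ε ^ 2 / 4) := by
  refine sqrt_le_iff.2 ⟨by positivity, ?_⟩
  rw [mul_pow, sq_sqrt (by linarith)]
  linarith

lemma sqrt_one_sub_sq_pow_le {n : ℕ} {ε : ℝ} (hn : n ≠ 0) (hε : ε ^ 2 ≤ 1 / 4) :
    √(1 - ε ^ 2) ^ n ≤ √3 * (1 - 2 * ε ^ 2) := by
  calc √(1 - ε ^ 2) ^ n ≤ √(1 - ε ^ 2) :=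
        pow_le_of_le_one (sqrt_nonneg _) (sqrt_le_one.2 (sub_le_self _ (sq_nonneg ε))) hn
    _ ≤ √3 * (1 - 2 * ε ^ 2) := by
        refine sqrt_le_iff.2 ⟨mul_nonneg (sqrt_nonneg 3) (by linarith), ?_⟩
        rw [mul_pow, sq_sqrt zero_le_three]
        nlinarith

variable {E : Type*} [NormedAddCommGroup E] [InnerProductSpace ℝ E] [FiniteDimensional ℝ E]

lemma toSphere_real_univ [MeasurableSpace E] [BorelSpace E] {n : ℕ} (hE : finrank ℝ E = n + 1) :
    (volume : Measure E).toSphere.real univ = (n + 1) * unitBallVolume (n + 1) := by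
  have : Nontrivial E := nontrivial_of_finrank_pos (R := ℝ) (by lia)
  rw [Measure.toSphere_real_apply_univ, volume_real_unitBall, hE, Nat.cast_succ]

lemma sq_add_sq_eq_one_of_chord {δ : ℝ} (hδ : δ ^ 2 ≤ 4) :
    (1 - δ ^ 2 / 2) ^ 2 + (δ * √(1 - δ ^ 2 / 4)) ^ 2 = 1 := by
  rw [mul_pow, sq_sqrt (by linarith)]
  ring

variable {n : ℕ} {ι : Type*} [Fintype ι] {x : ι → sphere (0 : E) 1} {δ : ℝ}

lemma card_mul_pow_le_of_separated (hn : 0 < n) (hE : finrank ℝ E = n + 1) (hδ₀ : 0 < δ)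
    (hδ : δ ^ 2 ≤ 2) (hsep : Pairwise fun i j ↦ 2 * δ < dist (x i) (x j)) :
    Fintype.card ι * (δ * √(1 - δ ^ 2 / 4)) ^ n ≤ π * √n := by
  borelize E
  have hs : 0 < √(1 - δ ^ 2 / 4) := sqrt_pos.2 (by linarith)
  have hcap (i : ι) : unitBallVolume n * (δ * √(1 - δ ^ 2 / 4)) ^ n ≤
      (volume : Measure E).toSphere.real (closedBall (x i) δ) := by
    rw [closedBall_eq_sphericalCap (x i) hδ₀.le]
    exact le_toSphere_real_sphericalCap hn hE (by linarith) (mul_pos hδ₀ hs)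
      (sq_add_sq_eq_one_of_chord (by linarith)) (x i)
  refine le_of_mul_le_mul_right ?_ (unitBallVolume_pos n)
  calc Fintype.card ι * (δ * √(1 - δ ^ 2 / 4)) ^ n * unitBallVolume n
      = Fintype.card ι * (unitBallVolume n * (δ * √(1 - δ ^ 2 / 4)) ^ n) := by ring
    _ ≤ (volume : Measure E).toSphere.real univ := card_mul_le_measureReal_univ hsep hcap
    _ = (n + 1) * unitBallVolume (n + 1) := toSphere_real_univ hE
    _ ≤ π * √n * unitBallVolume n := unitBallVolume_succ_le hn

lemma le_card_mul_pow_of_cover (hn : 0 < n) (hE : finrank ℝ E = n + 1) (hδ₀ : 0 < δ)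
    (hδ : δ ^ 2 < 2) (hcover : ∀ u, ∃ i, dist u (x i) ≤ δ) :
    √(2 * π) * √n * (1 - δ ^ 2 / 2) ≤ Fintype.card ι * (δ * √(1 - δ ^ 2 / 4)) ^ n := by
  borelize E
  have hs : 0 < √(1 - δ ^ 2 / 4) := sqrt_pos.2 (by linarith)
  have hc : 0 < 1 - δ ^ 2 / 2 := by linarith
  have hcap (i : ι) : (volume : Measure E).toSphere.real (closedBall (x i) δ) ≤
      unitBallVolume n * (δ * √(1 - δ ^ 2 / 4)) ^ n / (1 - δ ^ 2 / 2) := by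
    rw [closedBall_eq_sphericalCap (x i) hδ₀.le]
    exact toSphere_real_sphericalCap_le hn hE hc (mul_pos hδ₀ hs)
      (sq_add_sq_eq_one_of_chord (by linarith)) (x i)
  rw [← le_div_iff₀ hc]
  refine le_of_mul_le_mul_right ?_ (unitBallVolume_pos n)
  calc √(2 * π) * √n * unitBallVolume n
      ≤ (n + 1) * unitBallVolume (n + 1) := sqrt_mul_unitBallVolume_le hn
    _ = (volume : Measure E).toSphere.real univ := (toSphere_real_univ hE).symm
    _ ≤ Fintype.card ι *
          (unitBallVolume n * (δ * √(1 - δ ^ 2 / 4)) ^ n / (1 - δ ^ 2 / 2)) :=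
      measureReal_univ_le_card_mul hcover hcap
    _ = Fintype.card ι * (δ * √(1 - δ ^ 2 / 4)) ^ n / (1 - δ ^ 2 / 2) * unitBallVolume n := by
      ring

variable {ε : ℝ}

lemma card_le_of_separated (hn : 0 < n) (hE : finrank ℝ E = n + 1) (hε₀ : 0 < ε)
    (hε : ε ≤ 1 / 2) (hsep : Pairwise fun i j ↦ 2 * ε < dist (x i) (x j)) :
    Fintype.card ι ≤ 4 ^ n * π * √n / √15 ^ n / ε ^ n := by
  have hε_sq : ε ^ 2 ≤ 1 / 4 := by nlinarith
  rw [div_div, le_div_iff₀ (by positivity)]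
  calc Fintype.card ι * (√15 ^ n * ε ^ n)
      ≤ Fintype.card ι * ((4 * √(1 - ε ^ 2 / 4)) ^ n * ε ^ n) := by
        gcongr
        exact sqrt_fifteen_le_four_mul_sqrt hε_sq
    _ = 4 ^ n * (Fintype.card ι * (ε * √(1 - ε ^ 2 / 4)) ^ n) := by
        rw [mul_pow, mul_pow]
        ring
    _ ≤ 4 ^ n * (π * √n) := mul_le_mul_of_nonneg_left
        (card_mul_pow_le_of_separated hn hE hε₀ (by linarith) hsep) (by positivity)
    _ = 4 ^ n * π * √n := (mul_assoc _ _ _).symm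

lemma le_card_of_cover (hn : 0 < n) (hE : finrank ℝ E = n + 1) (hε₀ : 0 < ε)
    (hε : ε ≤ 1 / 2) (hcover : ∀ u, ∃ i, dist u (x i) ≤ 2 * ε) :
    √(2 * π) * √n / (√3 * 2 ^ n) / ε ^ n ≤ Fintype.card ι := by
  have hε_sq : ε ^ 2 ≤ 1 / 4 := by nlinarith
  have hcap := le_card_mul_pow_of_cover hn hE (by positivity) (by linarith) hcover
  have hheight : 1 - (2 * ε) ^ 2 / 2 = 1 - 2 * ε ^ 2 := by ring
  have hradius : 1 - (2 * ε) ^ 2 / 4 = 1 - ε ^ 2 := by ring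
  rw [hheight, hradius] at hcap
  rw [div_div, div_le_iff₀ (by positivity)]
  refine le_of_mul_le_mul_right ?_ (by linarith : 0 < 1 - 2 * ε ^ 2)
  calc √(2 * π) * √n * (1 - 2 * ε ^ 2)
      ≤ Fintype.card ι * (2 * ε * √(1 - ε ^ 2)) ^ n := hcap
    _ = Fintype.card ι * (2 ^ n * ε ^ n) * √(1 - ε ^ 2) ^ n := by
        rw [mul_pow, mul_pow]
        ring
    _ ≤ Fintype.card ι * (2 ^ n * ε ^ n) * (√3 * (1 - 2 * ε ^ 2)) := by
        gcongr
        exact sqrt_one_sub_sq_pow_le hn.ne' hε_sq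
    _ = Fintype.card ι * (√3 * 2 ^ n * ε ^ n) * (1 - 2 * ε ^ 2) := by ring

end Sphere

end SpherePacking

end

open SpherePacking

theorem sphere_packing_bounds_general {E : Type*} [NormedAddCommGroup E] [InnerProductSpace ℝ E]
    {d : ℕ} (hE : finrank ℝ E = d) (hd : 2 ≤ d) (ε : ℝ) (hε0 : 0 < ε) (hε : ε ≤ 1 / 2) (N : ℕ)
    (hN : IsGreatest {n : ℕ | ∃ x : Fin n → E,
      (∀ i, ‖x i‖ = 1) ∧ ∀ i j, i ≠ j → 2 * ε < ‖x i - x j‖} N) :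
    √(2 * π) * √(d - 1) / (√3 * 2 ^ (d - 1)) / ε ^ (d - 1) ≤ (N : ℝ) ∧
    (N : ℝ) ≤ 4 ^ (d - 1) * π * √(d - 1) / √15 ^ (d - 1) / ε ^ (d - 1) := by
  obtain ⟨n, rfl⟩ : ∃ n, d = n + 1 := Nat.exists_eq_add_one_of_ne_zero (by lia)
  have hn : 0 < n := by lia
  have : FiniteDimensional ℝ E := .of_finrank_pos (by lia)
  obtain ⟨⟨x, hx, hsep⟩, hmax⟩ := hN
  lift x to Fin N → sphere (0 : E) 1 using by simpa using hx
  have hsep : Pairwise fun i j ↦ 2 * ε < dist (x i) (x j) := fun i j hij ↦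
    (hsep i j hij).trans_eq (dist_eq_norm _ _).symm
  have hcover : ∀ u, ∃ i, dist u (x i) ≤ 2 * ε :=
    exists_dist_le_of_maximal hsep fun y hy ↦ N.not_succ_le_self <| hmax
      ⟨fun i ↦ y i, fun i ↦ norm_eq_of_mem_sphere (y i), fun _ _ hij ↦
        (hy hij).trans_eq (dist_eq_norm _ _)⟩
  rw [Nat.cast_succ, add_sub_cancel_right, Nat.add_sub_cancel]
  simpa only [Fintype.card_fin] using
    And.intro (le_card_of_cover hn hE hε0 hε hcover) (card_le_of_separated hn hE hε0 hε hsep)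

/-- Bounds on the `2ε`-packing number of the Euclidean unit sphere in `ℝ^d`, `d ≥ 2`,
for `ε ∈ (0, 1/2]`. -/
theorem sphere_packing_bounds {d : ℕ} (hd : 2 ≤ d) (ε : ℝ) (hε0 : 0 < ε) (hε : ε ≤ 1 / 2)
    (N : ℕ)
    (hN : IsGreatest {n : ℕ | ∃ x : Fin n → EuclideanSpace ℝ (Fin d),
      (∀ i, ‖x i‖ = 1) ∧ ∀ i j, i ≠ j → 2 * ε < ‖x i - x j‖} N) :
    Real.sqrt (2 * Real.pi) * Real.sqrt (d - 1) / (Real.sqrt 3 * 2 ^ (d - 1)) / ε ^ (d - 1)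
        ≤ (N : ℝ) ∧
    (N : ℝ) ≤ 4 ^ (d - 1) * Real.pi * Real.sqrt (d - 1) / Real.sqrt 15 ^ (d - 1) /
        ε ^ (d - 1) :=
  sphere_packing_bounds_general finrank_euclideanSpace_fin hd ε hε0 hε N hN
end

section
/- There exist constants A, B > 0 (depending only on d) such that every upper semi-continuous log-concave probability density f on ℝ^d with mean vector 0 and identity covariance matrix satisfies f(x) ≤ exp(-A‖x‖ + B) for all x ∈ ℝ^d. -/
/-!
Let `f` be an isotropic log-concave density on a space of dimension `n`.

*Bounded height.* Suppose that in some direction `u` the function `f` has dropped below `f z / e`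
at distance `w` from `z`. Log-concavity turns this drop into exponential decay of `f` at rate
`1 / w` in the direction `u`, so the second moment of `f` about `z` in that direction is at most a
multiple of `w ^ 2`, whereas isotropy makes it at least `1`. Hence, for a suitable `w` depending
only on `n`, the convex set `{f ≥ f z / e}` reaches distance `w` from `z` in every direction. It
then contains a parallelepiped of volume at least `(w / (n + 1)) ^ n`, and `∫ f = 1` bounds `f z`.

*Exponential tail.* Let `f ≤ C` and `t = T / ‖x‖`. Contracting space towards `x` by the factor
`1 - t` decreases `f` by at most the factor `(f x / C) ^ t` and moves most of the mass to distance
about `T` from the origin. Comparing with `∫ f * ‖·‖ ^ 2 = n` gives `(f x / C) ^ t ≤ 1 / e` for a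
large fixed `T`, that is, `f x ≤ C * exp (-‖x‖ / T)`.
-/

open MeasureTheory Module InnerProductSpace
open scoped Pointwise

section ConvexBodies

variable {ι E : Type*}

theorem vadd_smul_parallelepiped_subset_of_convex [Fintype ι] [AddCommGroup E] [Module ℝ E]
    {K : Set E} (hK : Convex ℝ K) {z : E} (hz : z ∈ K) {v : ι → E} (hv : ∀ i, z + v i ∈ K) :
    z +ᵥ (Fintype.card ι + 1 : ℝ)⁻¹ • parallelepiped v ⊆ K := by
  rintro _ ⟨_, ⟨y, hy, rfl⟩, rfl⟩
  obtain ⟨t, ⟨ht0, ht1⟩, rfl⟩ := (mem_parallelepiped_iff v y).1 hy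
  set c : ℝ := (Fintype.card ι + 1 : ℝ)⁻¹
  have hc : (Fintype.card ι + 1 : ℝ) * c = 1 := mul_inv_cancel₀ (by positivity)
  let p : Option ι → E := fun o => o.elim z fun i => z + t i • v i
  have hp : ∀ o ∈ Finset.univ, p o ∈ K := by
    rintro (_ | i) -
    · exact hz
    · exact hK.add_smul_mem hz (hv i) ⟨ht0 i, ht1 i⟩
  have hbarycenter : z + c • ∑ i, t i • v i = ∑ o, c • p o := by
    simp only [p, Fintype.sum_option, Option.elim_none, Option.elim_some, smul_add,
      Finset.sum_add_distrib, Finset.sum_const, Finset.card_univ, Finset.smul_sum, ← add_assoc,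
      ← Nat.cast_smul_eq_nsmul ℝ, smul_smul, ← add_smul]
    rw [← one_add_mul, add_comm 1, hc, one_smul]
  change z + c • ∑ i, t i • v i ∈ K
  rw [hbarycenter]
  exact hK.sum_mem (fun _ _ => by positivity) (by simpa using hc) hp

variable [NormedAddCommGroup E] [InnerProductSpace ℝ E]

theorem inner_gramSchmidtOrthonormalBasis_self [Fintype ι] [LinearOrder ι]
    [LocallyFiniteOrderBot ι] [WellFoundedLT ι] [FiniteDimensional ℝ E]
    (h : finrank ℝ E = Fintype.card ι) (v : ι → E) (i : ι) :
    ⟪gramSchmidtOrthonormalBasis h v i, v i⟫_ℝ = ‖gramSchmidt ℝ v i‖ := by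
  by_cases hi : gramSchmidtNormed ℝ v i = 0
  · rw [inner_gramSchmidtOrthonormalBasis_eq_zero h hi]
    simpa [gramSchmidtNormed, eq_comm] using hi
  · have hinner : ⟪gramSchmidt ℝ v i, v i⟫_ℝ = ‖gramSchmidt ℝ v i‖ ^ 2 := by
      conv_lhs => rw [gramSchmidt_def'' ℝ v i]
      rw [inner_add_right, inner_sum, Finset.sum_eq_zero, add_zero, real_inner_self_eq_norm_sq]
      intro j hj
      rw [inner_smul_right, gramSchmidt_orthogonal ℝ v (Finset.mem_Iio.1 hj).ne', mul_zero]
    have hne : ‖gramSchmidt ℝ v i‖ ≠ 0 := fun h0 => hi (by simp [gramSchmidtNormed, h0])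
    rw [gramSchmidtOrthonormalBasis_apply h hi, gramSchmidtNormed, real_inner_smul_left, hinner]
    simp only [RCLike.ofReal_real_eq_id, id_eq]
    field_simp

theorem volume_real_parallelepiped_eq_prod_norm_gramSchmidt [Fintype ι] [LinearOrder ι]
    [LocallyFiniteOrderBot ι] [WellFoundedLT ι] [FiniteDimensional ℝ E] [MeasurableSpace E]
    [BorelSpace E] (h : finrank ℝ E = Fintype.card ι) (v : ι → E) :
    volume.real (parallelepiped v) = ∏ i, ‖gramSchmidt ℝ v i‖ := by
  rw [measureReal_def, ← (gramSchmidtOrthonormalBasis h v).addHaar_eq_volume,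
    Measure.addHaar_parallelepiped, ENNReal.toReal_ofReal (abs_nonneg _),
    gramSchmidtOrthonormalBasis_det, Finset.abs_prod]
  simp only [inner_gramSchmidtOrthonormalBasis_self, abs_norm]

theorem abs_inner_le_norm_gramSchmidt [LinearOrder ι] [LocallyFiniteOrderBot ι] [WellFoundedLT ι]
    (v : ι → E) {i : ι} {u : E} (hu : ‖u‖ = 1) (horth : ∀ j < i, ⟪v j, u⟫_ℝ = 0) :
    |⟪v i, u⟫_ℝ| ≤ ‖gramSchmidt ℝ v i‖ := by
  have hspan : Submodule.span ℝ (v '' Set.Iio i) ≤ (ℝ ∙ u)ᗮ := by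
    rw [Submodule.span_le]
    rintro _ ⟨j, hj, rfl⟩
    exact Submodule.mem_orthogonal_singleton_iff_inner_left.2 (horth j hj)
  have horth' : ∀ j < i, ⟪gramSchmidt ℝ v j, u⟫_ℝ = 0 := fun j hj => by
    refine Submodule.mem_orthogonal_singleton_iff_inner_left.1 (hspan ?_)
    rw [← span_gramSchmidt_Iio]
    exact Submodule.subset_span ⟨j, hj, rfl⟩
  have hinner : ⟪v i, u⟫_ℝ = ⟪gramSchmidt ℝ v i, u⟫_ℝ := by
    conv_lhs => rw [gramSchmidt_def'' ℝ v i]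
    rw [inner_add_left, sum_inner, Finset.sum_eq_zero, add_zero]
    intro j hj
    rw [inner_smul_left, horth' j (Finset.mem_Iio.1 hj), mul_zero]
  rw [hinner]
  simpa [hu] using abs_real_inner_le_norm (gramSchmidt ℝ v i) u

theorem exists_norm_eq_one_forall_inner_eq_zero {k : ℕ} (hk : k < finrank ℝ E) (v : Fin k → E) :
    ∃ u : E, ‖u‖ = 1 ∧ ∀ i, ⟪v i, u⟫_ℝ = 0 := by
  have : FiniteDimensional ℝ E := .of_finrank_pos (by omega)
  set S := Submodule.span ℝ (Set.range v)
  have hS : finrank ℝ S ≤ k := (finrank_range_le_card v).trans_eq (Fintype.card_fin k)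
  have hS_orthogonal : Sᗮ ≠ ⊥ := by
    rw [Ne, Submodule.orthogonal_eq_bot_iff]
    intro htop
    rw [htop, finrank_top] at hS
    omega
  obtain ⟨x, hx, hx0⟩ := Submodule.exists_mem_ne_zero_of_ne_bot hS_orthogonal
  refine ⟨‖x‖⁻¹ • x, norm_smul_inv_norm hx0, fun i => ?_⟩
  rw [inner_smul_right, hx (v i) (Submodule.subset_span ⟨i, rfl⟩), mul_zero]

theorem exists_forall_mem_forall_le_norm_gramSchmidt {K : Set E} {w : ℝ}
    (hK : ∀ u : E, ‖u‖ = 1 → ∃ v ∈ K, w ≤ |⟪v, u⟫_ℝ|) {k : ℕ} (hk : k ≤ finrank ℝ E) :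
    ∃ v : Fin k → E, (∀ i, v i ∈ K) ∧ ∀ i, w ≤ ‖gramSchmidt ℝ v i‖ := by
  suffices h : ∃ v : Fin k → E, (∀ i, v i ∈ K) ∧
      ∀ i, ∃ u, ‖u‖ = 1 ∧ (∀ j < i, ⟪v j, u⟫_ℝ = 0) ∧ w ≤ |⟪v i, u⟫_ℝ| by
    obtain ⟨v, hvK, hv⟩ := h
    refine ⟨v, hvK, fun i => ?_⟩
    obtain ⟨u, hu, horth, hw⟩ := hv i
    exact hw.trans (abs_inner_le_norm_gramSchmidt v hu horth)
  induction k with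
  | zero => exact ⟨Fin.elim0, fun i => i.elim0, fun i => i.elim0⟩
  | succ k ih =>
    obtain ⟨v, hvK, hv⟩ := ih (by omega)
    obtain ⟨u, hu, huv⟩ := exists_norm_eq_one_forall_inner_eq_zero hk v
    obtain ⟨y, hyK, hyw⟩ := hK u hu
    refine ⟨Fin.snoc v y, fun i => ?_, fun i => ?_⟩
    · induction i using Fin.lastCases <;> simp [hyK, hvK]
    · induction i using Fin.lastCases with
      | last =>
        refine ⟨u, hu, fun j hj => ?_, by simpa using hyw⟩
        obtain ⟨j, rfl⟩ := Fin.exists_castSucc_eq.2 hj.ne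
        simpa using huv j
      | cast i =>
        obtain ⟨u', hu', horth, hw⟩ := hv i
        refine ⟨u', hu', fun j hj => ?_, by simpa using hw⟩
        obtain ⟨j, rfl⟩ := Fin.exists_castSucc_eq.2 (hj.trans (Fin.castSucc_lt_last i)).ne
        simpa using horth j (by simpa using hj)

variable [FiniteDimensional ℝ E] [MeasurableSpace E] [BorelSpace E]

theorem pow_finrank_le_volume_real_of_convex {K : Set E} (hK : Convex ℝ K) (hKfin : volume K ≠ ⊤)
    {z : E} (hz : z ∈ K) {w : ℝ} (hw : 0 ≤ w)
    (hwide : ∀ u : E, ‖u‖ = 1 → ∃ x ∈ K, w ≤ |⟪x - z, u⟫_ℝ|) :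
    (w / (finrank ℝ E + 1)) ^ finrank ℝ E ≤ volume.real K := by
  set n := finrank ℝ E with hn
  obtain ⟨v, hvK, hvw⟩ := exists_forall_mem_forall_le_norm_gramSchmidt (K := {v | z + v ∈ K})
    (fun u hu => by
      obtain ⟨x, hx, hxw⟩ := hwide u hu
      exact ⟨x - z, by simpa using hx, hxw⟩) hn.le
  have hvol : w ^ n ≤ volume.real (parallelepiped v) := by
    rw [volume_real_parallelepiped_eq_prod_norm_gramSchmidt (by simp [hn])]
    simpa using Finset.prod_le_prod (fun i (_ : i ∈ Finset.univ) => hw) fun i _ => hvw i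
  have hsub := vadd_smul_parallelepiped_subset_of_convex hK hz hvK
  calc (w / (n + 1)) ^ n = ((n + 1 : ℝ)⁻¹) ^ n * w ^ n := by rw [← mul_pow, div_eq_inv_mul]
    _ ≤ ((n + 1 : ℝ)⁻¹) ^ n * volume.real (parallelepiped v) := by gcongr
    _ = volume.real (z +ᵥ (n + 1 : ℝ)⁻¹ • parallelepiped v) := by
      rw [measureReal_def, measureReal_def, measure_vadd,
        Measure.addHaar_smul_of_nonneg _ (by positivity), ENNReal.toReal_mul,
        ENNReal.toReal_ofReal (by positivity)]
    _ ≤ volume.real K := measureReal_mono (by simpa using hsub) hKfin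

end ConvexBodies

section ChangeOfVariables

variable {E F : Type*} [NormedAddCommGroup E] [NormedSpace ℝ E] [FiniteDimensional ℝ E]
  [MeasurableSpace E] [BorelSpace E] [NormedAddCommGroup F]

theorem integrable_comp_smul_add {μ : Measure E} [μ.IsAddHaarMeasure] {g : E → F}
    (hg : Integrable g μ) {a : ℝ} (ha : a ≠ 0) (p : E) :
    Integrable (fun x => g (a • x + p)) μ :=
  (hg.comp_add_right p).comp_smul ha

theorem integral_comp_smul_add [NormedSpace ℝ F] (μ : Measure E) [μ.IsAddHaarMeasure] (g : E → F)
    (a : ℝ) (p : E) :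
    ∫ x, g (a • x + p) ∂μ = |(a ^ finrank ℝ E)⁻¹| • ∫ x, g x ∂μ := by
  rw [Measure.integral_comp_smul μ (fun x => g (x + p)) a, integral_add_right_eq_self]

end ChangeOfVariables

theorem half_sq_norm_smul_sub_sq_norm_le {E : Type*} [SeminormedAddCommGroup E] [NormedSpace ℝ E]
    (x y : E) {t : ℝ} (ht0 : 0 ≤ t) (ht1 : t ≤ 1) :
    (t * ‖x‖) ^ 2 / 2 - ‖y‖ ^ 2 ≤ ‖(1 - t) • y + t • x‖ ^ 2 := by
  set p := (1 - t) • y + t • x with hp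
  have htriangle : t * ‖x‖ ≤ ‖p‖ + ‖y‖ :=
    calc t * ‖x‖ = ‖p - (1 - t) • y‖ := by
          rw [hp, add_sub_cancel_left, norm_smul, Real.norm_of_nonneg ht0]
      _ ≤ ‖p‖ + ‖(1 - t) • y‖ := norm_sub_le _ _
      _ = ‖p‖ + (1 - t) * ‖y‖ := by rw [norm_smul, Real.norm_of_nonneg (by linarith)]
      _ ≤ ‖p‖ + ‖y‖ := by gcongr; exact mul_le_of_le_one_left (norm_nonneg y) (by linarith)
  have hsq : (t * ‖x‖) ^ 2 ≤ (‖p‖ + ‖y‖) ^ 2 := by gcongr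
  linarith [add_sq_le (a := ‖p‖) (b := ‖y‖)]

/-- Log-concavity of a real function, in the multiplicative form that allows `f` to vanish and so
encodes `f = exp φ` for a concave `φ` with values in `[-∞, ∞)`. -/
structure LogConcave {E : Type*} [AddCommGroup E] [Module ℝ E] (f : E → ℝ) : Prop where
  nonneg : ∀ x, 0 ≤ f x
  rpow_mul_rpow_le : ∀ x y : E, ∀ a b : ℝ, 0 ≤ a → 0 ≤ b → a + b = 1 →
    f x ^ a * f y ^ b ≤ f (a • x + b • y)

theorem le_mul_exp_neg_inv_of_div_rpow_le {a C t : ℝ} (ha : 0 ≤ a) (hC : 0 < C) (ht : 0 < t)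
    (h : (a / C) ^ t ≤ Real.exp (-1)) : a ≤ C * Real.exp (-t⁻¹) := by
  have hroot : ((a / C) ^ t) ^ t⁻¹ ≤ Real.exp (-1) ^ t⁻¹ := by gcongr
  rw [Real.rpow_rpow_inv (by positivity) ht.ne', ← Real.exp_mul, neg_one_mul] at hroot
  rwa [mul_comm, ← div_le_iff₀ hC]

namespace LogConcave

section Module

variable {E : Type*} [AddCommGroup E] [Module ℝ E] {f : E → ℝ}

theorem convex_setOf_le (hf : LogConcave f) {m : ℝ} (hm : 0 < m) : Convex ℝ {x | m ≤ f x} := by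
  intro x (hx : m ≤ f x) y (hy : m ≤ f y) a b ha hb hab
  have hfx : 0 ≤ f x := hf.nonneg x
  calc m = m ^ a * m ^ b := by rw [← Real.rpow_add hm, hab, Real.rpow_one]
    _ ≤ f x ^ a * f y ^ b := by gcongr
    _ ≤ f (a • x + b • y) := hf.rpow_mul_rpow_le x y a b ha hb hab

theorem div_rpow_mul_le (hf : LogConcave f) {C t : ℝ} (hC : 0 < C) (ht0 : 0 ≤ t) (ht1 : t ≤ 1)
    (x : E) {y : E} (hy : f y ≤ C) :
    (f x / C) ^ t * f y ≤ f ((1 - t) • y + t • x) := by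
  have hfx := hf.nonneg x
  have hfy := hf.nonneg y
  calc (f x / C) ^ t * f y = (f x / C) ^ t * (f y ^ (1 - t) * f y ^ t) := by
        rw [← Real.rpow_add_of_nonneg hfy (by linarith) ht0, sub_add_cancel, Real.rpow_one]
    _ ≤ (f x / C) ^ t * (f y ^ (1 - t) * C ^ t) := by gcongr
    _ = f y ^ (1 - t) * f x ^ t := by
      rw [mul_left_comm, ← Real.mul_rpow (by positivity) hC.le, div_mul_cancel₀ _ hC.ne']
    _ ≤ f ((1 - t) • y + t • x) := hf.rpow_mul_rpow_le y x (1 - t) t (by linarith) ht0 (by ring)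

theorem le_mul_exp_neg_inv (hf : LogConcave f) {x z : E} (hz : 0 < f z) {t : ℝ} (ht0 : 0 < t)
    (ht1 : t ≤ 1) (h : f ((1 - t) • z + t • x) ≤ f z * Real.exp (-1)) :
    f x ≤ f z * Real.exp (-t⁻¹) := by
  refine le_mul_exp_neg_inv_of_div_rpow_le (hf.nonneg x) hz ht0 (le_of_mul_le_mul_right ?_ hz)
  rw [mul_comm (Real.exp _)]
  exact (hf.div_rpow_mul_le hz ht0.le ht1 x le_rfl).trans h

theorem mul_exp_half_le (hf : LogConcave f) {x z : E} {r : ℝ} (h : f x * Real.exp r ≤ f z) :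
    f x * Real.exp (r / 2) ≤ f ((1 / 2 : ℝ) • x + (1 / 2 : ℝ) • z) := by
  rcases (hf.nonneg x).eq_or_lt with hx | hx
  · rw [← hx, zero_mul]
    exact hf.nonneg _
  · have hratio : Real.exp r ≤ f z / f x := by rwa [le_div_iff₀ hx, mul_comm]
    calc f x * Real.exp (r / 2) = Real.exp r ^ (1 / 2 : ℝ) * f x := by
          rw [← Real.exp_mul, mul_one_div, mul_comm]
      _ ≤ (f z / f x) ^ (1 / 2 : ℝ) * f x := by gcongr
      _ ≤ f ((1 - 1 / 2 : ℝ) • x + (1 / 2 : ℝ) • z) :=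
        hf.div_rpow_mul_le hx (by norm_num) (by norm_num) z le_rfl
      _ = f ((1 / 2 : ℝ) • x + (1 / 2 : ℝ) • z) := by norm_num

theorem le_mul_exp_neg_div_of_forall_le_mul_exp_neg_one (hf : LogConcave f) {z : E}
    (hz : 0 < f z) (ℓ : E →ₗ[ℝ] ℝ) {w : ℝ} (hw : 0 < w)
    (hdrop : ∀ x, w ≤ |ℓ (x - z)| → f x ≤ f z * Real.exp (-1)) {x : E}
    (hx : w ≤ |ℓ (x - z)|) : f x ≤ f z * Real.exp (-(|ℓ (x - z)| / w)) := by
  have hpos : 0 < |ℓ (x - z)| := hw.trans_le hx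
  set t := w / |ℓ (x - z)| with ht
  have ht0 : 0 < t := by positivity
  have hdist : |ℓ ((1 - t) • z + t • x - z)| = w := by
    rw [show (1 - t) • z + t • x - z = t • (x - z) by module, map_smul, smul_eq_mul, abs_mul,
      abs_of_pos ht0, ht, div_mul_cancel₀ _ hpos.ne']
  have := hf.le_mul_exp_neg_inv hz ht0 ((div_le_one hpos).2 hx) (hdrop _ hdist.ge)
  rwa [ht, inv_div] at this

theorem mul_sq_le_of_forall_le_mul_exp_neg_one (hf : LogConcave f) {z : E}
    (hz : 0 < f z) (ℓ : E →ₗ[ℝ] ℝ) {w : ℝ} (hw : 0 < w)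
    (hdrop : ∀ x, w ≤ |ℓ (x - z)| → f x ≤ f z * Real.exp (-1)) (x : E) :
    f x * ℓ (x - z) ^ 2 ≤
      w ^ 2 * (f x + 8 * f ((1 / 2 : ℝ) • x + (1 / 2 : ℝ) • z)) := by
  have hfx := hf.nonneg x
  have hfmid := hf.nonneg ((1 / 2 : ℝ) • x + (1 / 2 : ℝ) • z)
  set r := |ℓ (x - z)| / w with hr
  have hr0 : 0 ≤ r := by positivity
  have hℓ : ℓ (x - z) ^ 2 = w ^ 2 * r ^ 2 := by
    rw [← mul_pow, hr, mul_div_cancel₀ _ hw.ne', sq_abs]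
  suffices h : f x * r ^ 2 ≤ f x + 8 * f ((1 / 2 : ℝ) • x + (1 / 2 : ℝ) • z) by
    rw [hℓ, mul_left_comm]
    gcongr
  rcases le_total w |ℓ (x - z)| with hx | hx
  · have hdecay : f x * Real.exp r ≤ f z := by
      have := hf.le_mul_exp_neg_div_of_forall_le_mul_exp_neg_one hz ℓ hw hdrop hx
      rwa [Real.exp_neg, ← div_eq_mul_inv, le_div_iff₀ (Real.exp_pos _)] at this
    have hsq : r ^ 2 ≤ 8 * Real.exp (r / 2) := by
      linarith [Real.quadratic_le_exp_of_nonneg (show 0 ≤ r / 2 by positivity)]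
    calc f x * r ^ 2 ≤ f x * (8 * Real.exp (r / 2)) := by gcongr
      _ = 8 * (f x * Real.exp (r / 2)) := by ring
      _ ≤ 8 * f ((1 / 2 : ℝ) • x + (1 / 2 : ℝ) • z) := by gcongr; exact hf.mul_exp_half_le hdecay
      _ ≤ _ := by linarith
  · have hr1 : r ^ 2 ≤ 1 := pow_le_one₀ hr0 ((div_le_one hw).2 hx)
    calc f x * r ^ 2 ≤ f x * 1 := by gcongr
      _ ≤ _ := by linarith

end Module

section NormedSpace

variable {E : Type*} [NormedAddCommGroup E] [NormedSpace ℝ E] [FiniteDimensional ℝ E]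
  [MeasurableSpace E] [BorelSpace E] {μ : Measure E} [μ.IsAddHaarMeasure] {f : E → ℝ}

theorem integral_mul_sq_le (hf : LogConcave f) (hfi : Integrable f μ) {z : E} (hz : 0 < f z)
    (ℓ : E →ₗ[ℝ] ℝ) {w : ℝ} (hw : 0 < w)
    (hdrop : ∀ x, w ≤ |ℓ (x - z)| → f x ≤ f z * Real.exp (-1)) :
    ∫ x, f x * ℓ (x - z) ^ 2 ∂μ ≤ w ^ 2 * ((1 + 8 * 2 ^ finrank ℝ E) * ∫ x, f x ∂μ) := by
  have hmid : Integrable (fun x => f ((1 / 2 : ℝ) • x + (1 / 2 : ℝ) • z)) μ :=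
    integrable_comp_smul_add hfi (by norm_num) _
  calc ∫ x, f x * ℓ (x - z) ^ 2 ∂μ
      ≤ ∫ x, w ^ 2 * (f x + 8 * f ((1 / 2 : ℝ) • x + (1 / 2 : ℝ) • z)) ∂μ :=
        integral_mono_of_nonneg (.of_forall fun x => mul_nonneg (hf.nonneg x) (sq_nonneg _))
          ((hfi.add (hmid.const_mul 8)).const_mul _)
          (.of_forall (hf.mul_sq_le_of_forall_le_mul_exp_neg_one hz ℓ hw hdrop))
    _ = w ^ 2 * ((1 + 8 * 2 ^ finrank ℝ E) * ∫ x, f x ∂μ) := by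
      rw [integral_const_mul, integral_add hfi (hmid.const_mul 8), integral_const_mul,
        integral_comp_smul_add, abs_of_pos (by positivity), one_div, inv_pow, inv_inv, smul_eq_mul]
      ring

theorem div_rpow_mul_le_integral_mul_norm_sq (hf : LogConcave f) (hfi : Integrable f μ)
    (hfi₂ : Integrable (fun y => f y * ‖y‖ ^ 2) μ) {C t : ℝ} (hC : 0 < C) (hfC : ∀ y, f y ≤ C)
    (ht0 : 0 ≤ t) (ht1 : t < 1) (x : E) :
    (f x / C) ^ t * ((t * ‖x‖) ^ 2 / 2 * ∫ y, f y ∂μ - ∫ y, f y * ‖y‖ ^ 2 ∂μ) ≤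
      ((1 - t) ^ finrank ℝ E)⁻¹ * ∫ y, f y * ‖y‖ ^ 2 ∂μ := by
  set q := (f x / C) ^ t
  set p : E → E := fun y => (1 - t) • y + t • x
  have hq0 : 0 ≤ q := Real.rpow_nonneg (div_nonneg (hf.nonneg x) hC.le) t
  have ht : 0 < 1 - t := sub_pos.2 ht1
  have hpointwise : ∀ y, q * ((t * ‖x‖) ^ 2 / 2 * f y - f y * ‖y‖ ^ 2) ≤ f (p y) * ‖p y‖ ^ 2 :=
    fun y => calc
      _ = q * f y * ((t * ‖x‖) ^ 2 / 2 - ‖y‖ ^ 2) := by ring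
      _ ≤ q * f y * ‖p y‖ ^ 2 := by
        have := hf.nonneg y
        gcongr
        exact half_sq_norm_smul_sub_sq_norm_le x y ht0 ht1.le
      _ ≤ f (p y) * ‖p y‖ ^ 2 := by
        gcongr
        exact hf.div_rpow_mul_le hC ht0 ht1.le x (hfC y)
  calc q * ((t * ‖x‖) ^ 2 / 2 * ∫ y, f y ∂μ - ∫ y, f y * ‖y‖ ^ 2 ∂μ)
      = ∫ y, q * ((t * ‖x‖) ^ 2 / 2 * f y - f y * ‖y‖ ^ 2) ∂μ := by
        rw [integral_const_mul, integral_sub (hfi.const_mul _) hfi₂, integral_const_mul]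
    _ ≤ ∫ y, f (p y) * ‖p y‖ ^ 2 ∂μ :=
        integral_mono (((hfi.const_mul _).sub hfi₂).const_mul q)
          (integrable_comp_smul_add hfi₂ ht.ne' (t • x)) hpointwise
    _ = ((1 - t) ^ finrank ℝ E)⁻¹ * ∫ y, f y * ‖y‖ ^ 2 ∂μ := by
      rw [integral_comp_smul_add μ (fun y => f y * ‖y‖ ^ 2), abs_of_pos (by positivity),
        smul_eq_mul]

theorem le_mul_exp_neg_norm_div (hf : LogConcave f) (hf₁ : ∫ y, f y ∂μ = 1)
    (hfi₂ : Integrable (fun y => f y * ‖y‖ ^ 2) μ) {C D T : ℝ} (hC : 0 < C) (hfC : ∀ y, f y ≤ C)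
    (hD : 0 < D) (hfD : ∫ y, f y * ‖y‖ ^ 2 ∂μ ≤ D) (hT : 0 < T)
    (hTD : (1 + Real.exp 1 * 2 ^ finrank ℝ E) * D ≤ T ^ 2 / 2) {x : E} (hx : 2 * T ≤ ‖x‖) :
    f x ≤ C * Real.exp (-(‖x‖ / T)) := by
  set n := finrank ℝ E
  set V := ∫ y, f y * ‖y‖ ^ 2 ∂μ
  have hx0 : 0 < ‖x‖ := by linarith
  set t := T / ‖x‖ with ht
  have ht0 : 0 < t := by positivity
  have ht_half : t ≤ 1 / 2 := by rw [ht, div_le_iff₀ hx0]; linarith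
  set q := (f x / C) ^ t
  have hq0 : 0 ≤ q := Real.rpow_nonneg (div_nonneg (hf.nonneg x) hC.le) t
  have hcontract : ((1 - t) ^ n)⁻¹ ≤ 2 ^ n := by
    rw [← inv_pow]
    have : 0 < 1 - t := by linarith
    gcongr
    rw [inv_le_comm₀ this two_pos]
    linarith
  have hcompare : q * (Real.exp 1 * (2 ^ n * D)) ≤ 2 ^ n * D := by
    calc q * (Real.exp 1 * (2 ^ n * D)) ≤ q * ((t * ‖x‖) ^ 2 / 2 * 1 - V) := by
          rw [ht, div_mul_cancel₀ _ hx0.ne']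
          gcongr
          linarith
      _ ≤ ((1 - t) ^ n)⁻¹ * V := by
          have h := hf.div_rpow_mul_le_integral_mul_norm_sq (integrable_of_integral_eq_one hf₁)
            hfi₂ hC hfC ht0.le (by linarith) x
          rwa [hf₁] at h
      _ ≤ 2 ^ n * D := by
          have : 0 ≤ V := integral_nonneg fun y => mul_nonneg (hf.nonneg y) (sq_nonneg _)
          gcongr
  have hq : q ≤ Real.exp (-1) := by
    rw [Real.exp_neg, ← one_div, le_div_iff₀ (Real.exp_pos 1)]
    exact le_of_mul_le_mul_right (by linarith) (show 0 < 2 ^ n * D by positivity)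
  rw [← inv_div]
  exact le_mul_exp_neg_inv_of_div_rpow_le (hf.nonneg x) hC ht0 hq

theorem le_mul_exp_two_sub_norm_div (hf : LogConcave f) (hf₁ : ∫ y, f y ∂μ = 1)
    (hfi₂ : Integrable (fun y => f y * ‖y‖ ^ 2) μ) {C D T : ℝ} (hC : 0 < C) (hfC : ∀ y, f y ≤ C)
    (hD : 0 < D) (hfD : ∫ y, f y * ‖y‖ ^ 2 ∂μ ≤ D) (hT : 0 < T)
    (hTD : (1 + Real.exp 1 * 2 ^ finrank ℝ E) * D ≤ T ^ 2 / 2) (x : E) :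
    f x ≤ C * Real.exp (2 - ‖x‖ / T) := by
  rcases le_total (2 * T) ‖x‖ with hx | hx
  · refine (hf.le_mul_exp_neg_norm_div hf₁ hfi₂ hC hfC hD hfD hT hTD hx).trans ?_
    gcongr
    linarith
  · have hxT : ‖x‖ / T ≤ 2 := (div_le_iff₀ hT).2 hx
    exact (hfC x).trans (le_mul_of_one_le_right hC.le (Real.one_le_exp (sub_nonneg.2 hxT)))

end NormedSpace

section InnerProductSpace

variable {E : Type*} [NormedAddCommGroup E] [InnerProductSpace ℝ E] [FiniteDimensional ℝ E]
  [MeasurableSpace E] [BorelSpace E] {f : E → ℝ}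

theorem mul_exp_neg_one_mul_pow_le_one (hf : LogConcave f) (hf₁ : ∫ x, f x = 1) {z : E}
    (hz : 0 < f z) {w : ℝ} (hw : 0 < w)
    (hwide : ∀ u : E, ‖u‖ = 1 → ∃ x, f z * Real.exp (-1) ≤ f x ∧ w ≤ |⟪x - z, u⟫_ℝ|) :
    f z * Real.exp (-1) * (w / (finrank ℝ E + 1)) ^ finrank ℝ E ≤ 1 := by
  set m := f z * Real.exp (-1)
  have hm : 0 < m := by positivity
  have hfi : Integrable f := integrable_of_integral_eq_one hf₁
  have hmz : m ≤ f z := mul_le_of_le_one_right hz.le (Real.exp_le_one_iff.2 (by norm_num))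
  calc m * (w / (finrank ℝ E + 1)) ^ finrank ℝ E ≤ m * volume.real {x | m ≤ f x} := by
        gcongr
        exact pow_finrank_le_volume_real_of_convex (hf.convex_setOf_le hm)
          (hfi.measure_ge_lt_top hm).ne hmz hw.le hwide
    _ ≤ ∫ x, f x := mul_meas_ge_le_integral_of_nonneg (.of_forall hf.nonneg) hfi m
    _ = 1 := hf₁

theorem le_exp_one_mul_pow (hf : LogConcave f) (hf₁ : ∫ x, f x = 1) {z : E}
    (hvar : ∀ u : E, ‖u‖ = 1 → 1 ≤ ∫ x, f x * ⟪x - z, u⟫_ℝ ^ 2) :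
    f z ≤ Real.exp 1 * ((finrank ℝ E + 1) * 2 ^ (finrank ℝ E + 2)) ^ finrank ℝ E := by
  set n := finrank ℝ E
  rcases (hf.nonneg z).eq_or_lt with hz | hz
  · rw [← hz]
    positivity
  set w : ℝ := (2 ^ (n + 2))⁻¹ with hw_def
  have hw : 0 < w := by positivity
  have hw_small : w ^ 2 * (1 + 8 * 2 ^ n) < 1 := by
    rw [hw_def, inv_pow, inv_mul_lt_iff₀ (by positivity)]
    have : (1 : ℝ) ≤ 2 ^ n := one_le_pow₀ one_le_two
    rw [pow_add]
    nlinarith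
  have hwide : ∀ u : E, ‖u‖ = 1 → ∃ x, f z * Real.exp (-1) ≤ f x ∧ w ≤ |⟪x - z, u⟫_ℝ| := by
    intro u hu
    by_contra! hnarrow
    have hdrop : ∀ x, w ≤ |⟪x - z, u⟫_ℝ| → f x ≤ f z * Real.exp (-1) := fun x hx =>
      le_of_not_ge fun h => (hnarrow x h).not_ge hx
    have hsmall := hf.integral_mul_sq_le (integrable_of_integral_eq_one hf₁) hz
      ((innerₛₗ ℝ).flip u) hw hdrop
    simp only [LinearMap.flip_apply, innerₛₗ_apply_apply, hf₁, mul_one] at hsmall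
    linarith [hvar u hu]
  have hmarkov := hf.mul_exp_neg_one_mul_pow_le_one hf₁ hz hw hwide
  rwa [hw_def, inv_div_left, inv_pow, ← div_eq_mul_inv, div_le_one (by positivity), Real.exp_neg,
    ← div_eq_mul_inv, div_le_iff₀' (Real.exp_pos 1)] at hmarkov

end InnerProductSpace

end LogConcave

theorem integrable_mul_mul_of_integrable_mul_sq {α : Type*} [MeasurableSpace α] {μ : Measure α}
    {f φ ψ : α → ℝ} (hf : ∀ x, 0 ≤ f x) (hfm : AEStronglyMeasurable f μ)
    (hφm : AEStronglyMeasurable φ μ) (hψm : AEStronglyMeasurable ψ μ)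
    (hφ : Integrable (fun x => f x * φ x ^ 2) μ) (hψ : Integrable (fun x => f x * ψ x ^ 2) μ) :
    Integrable (fun x => f x * (φ x * ψ x)) μ := by
  refine (hφ.add hψ).mono' (hfm.mul (hφm.mul hψm)) (.of_forall fun x => ?_)
  rw [Pi.add_apply, ← mul_add, norm_mul, Real.norm_of_nonneg (hf x)]
  refine mul_le_mul_of_nonneg_left ?_ (hf x)
  rw [Real.norm_eq_abs, abs_le]
  constructor <;> nlinarith [sq_nonneg (φ x - ψ x), sq_nonneg (φ x + ψ x)]

/-- The normalization of a density with respect to `volume`: unit mass, zero mean and identity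
covariance, the latter two expressed through the one-dimensional marginals so that no basis is
chosen. For nonnegative `f` integrability is implicit: an integral with a nonzero value is not a
junk value, and the second moments control the first ones. -/
structure IsIsotropicDensity {E : Type*} [NormedAddCommGroup E] [InnerProductSpace ℝ E]
    [FiniteDimensional ℝ E] [MeasurableSpace E] [BorelSpace E] (f : E → ℝ) : Prop where
  integral_eq_one : ∫ x, f x = 1
  integral_mul_inner : ∀ u : E, ∫ x, f x * ⟪x, u⟫_ℝ = 0
  integral_mul_inner_sq : ∀ u : E, ∫ x, f x * ⟪x, u⟫_ℝ ^ 2 = ‖u‖ ^ 2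

namespace IsIsotropicDensity

section InnerProductSpace

variable {E : Type*} [NormedAddCommGroup E] [InnerProductSpace ℝ E] [FiniteDimensional ℝ E]
  [MeasurableSpace E] [BorelSpace E] {f : E → ℝ}

theorem integrable (hf : IsIsotropicDensity f) : Integrable f :=
  integrable_of_integral_eq_one hf.integral_eq_one

theorem integrable_mul_inner_sq (hf : IsIsotropicDensity f) (u : E) :
    Integrable fun x => f x * ⟪x, u⟫_ℝ ^ 2 := by
  rcases eq_or_ne u 0 with rfl | hu
  · simp
  · exact .of_integral_ne_zero (by simpa [hf.integral_mul_inner_sq] using hu)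

theorem integrable_mul_inner (hf : IsIsotropicDensity f) (hf0 : ∀ x, 0 ≤ f x) (u : E) :
    Integrable fun x => f x * ⟪x, u⟫_ℝ := by
  simpa using integrable_mul_mul_of_integrable_mul_sq (ψ := 1) hf0
    hf.integrable.aestronglyMeasurable (by fun_prop) aestronglyMeasurable_const
    (hf.integrable_mul_inner_sq u) (by simpa using hf.integrable)

theorem integral_mul_inner_sub_sq (hf : IsIsotropicDensity f) (hf0 : ∀ x, 0 ≤ f x) (z u : E) :
    ∫ x, f x * ⟪x - z, u⟫_ℝ ^ 2 = ‖u‖ ^ 2 + ⟪z, u⟫_ℝ ^ 2 := by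
  have hexpand : ∀ x, f x * ⟪x - z, u⟫_ℝ ^ 2 =
      f x * ⟪x, u⟫_ℝ ^ 2 - 2 * ⟪z, u⟫_ℝ * (f x * ⟪x, u⟫_ℝ) + ⟪z, u⟫_ℝ ^ 2 * f x := fun x => by
    rw [inner_sub_left]
    ring
  have hi₂ := hf.integrable_mul_inner_sq u
  have hi₁ := (hf.integrable_mul_inner hf0 u).const_mul (2 * ⟪z, u⟫_ℝ)
  have hi₂₁ : Integrable fun x => f x * ⟪x, u⟫_ℝ ^ 2 - 2 * ⟪z, u⟫_ℝ * (f x * ⟪x, u⟫_ℝ) :=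
    hi₂.sub hi₁
  simp only [hexpand]
  rw [integral_add hi₂₁ (hf.integrable.const_mul _), integral_sub hi₂ hi₁,
    integral_const_mul, integral_const_mul, hf.integral_mul_inner_sq, hf.integral_mul_inner,
    hf.integral_eq_one]
  ring

theorem integrable_mul_norm_sq (hf : IsIsotropicDensity f) :
    Integrable fun x => f x * ‖x‖ ^ 2 := by
  simp only [← (stdOrthonormalBasis ℝ E).sum_sq_inner_left, Finset.mul_sum]
  exact integrable_finsetSum _ fun i _ => hf.integrable_mul_inner_sq _

theorem integral_mul_norm_sq (hf : IsIsotropicDensity f) :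
    ∫ x, f x * ‖x‖ ^ 2 = finrank ℝ E := by
  simp only [← (stdOrthonormalBasis ℝ E).sum_sq_inner_left, Finset.mul_sum]
  rw [integral_finsetSum _ fun i _ => hf.integrable_mul_inner_sq _]
  simp [hf.integral_mul_inner_sq]

end InnerProductSpace

theorem of_coordinates {ι : Type*} [Fintype ι] [DecidableEq ι] {f : EuclideanSpace ℝ ι → ℝ}
    (hf0 : ∀ x, 0 ≤ f x) (hmass : ∫ x, f x = 1) (hmean : ∀ i, ∫ x, f x * x i = 0)
    (hcov : ∀ i j, ∫ x, f x * (x i * x j) = if i = j then (1 : ℝ) else 0) :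
    IsIsotropicDensity f := by
  have hfi : Integrable f := integrable_of_integral_eq_one hmass
  have hi₂ : ∀ i, Integrable fun x => f x * x i ^ 2 := fun i =>
    integrable_of_integral_eq_one (by simpa [sq] using hcov i i)
  have hi₁₁ : ∀ i j, Integrable fun x => f x * (x i * x j) := fun i j =>
    integrable_mul_mul_of_integrable_mul_sq hf0 hfi.aestronglyMeasurable (by fun_prop)
      (by fun_prop) (hi₂ i) (hi₂ j)
  have hi₁ : ∀ i, Integrable fun x => f x * x i := fun i => by
    simpa using integrable_mul_mul_of_integrable_mul_sq (ψ := 1) hf0 hfi.aestronglyMeasurable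
      (by fun_prop) aestronglyMeasurable_const (hi₂ i) (by simpa using hfi)
  refine ⟨hmass, fun u => ?_, fun u => ?_⟩
  · have hexpand : ∀ x : EuclideanSpace ℝ ι, f x * ⟪x, u⟫_ℝ = ∑ i, u i * (f x * x i) := fun x => by
      simp [PiLp.inner_apply, Finset.mul_sum, mul_left_comm]
    simp only [hexpand]
    rw [integral_finsetSum _ fun i _ => (hi₁ i).const_mul _]
    simp [integral_const_mul, hmean]
  · have hexpand : ∀ x : EuclideanSpace ℝ ι,
        f x * ⟪x, u⟫_ℝ ^ 2 = ∑ i, ∑ j, u i * u j * (f x * (x i * x j)) := fun x => by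
      simp only [PiLp.inner_apply, sq]
      rw [Finset.sum_mul_sum]
      simp only [Finset.mul_sum]
      refine Finset.sum_congr rfl fun i _ => Finset.sum_congr rfl fun j _ => ?_
      simp only [RCLike.inner_apply, conj_trivial]
      ring
    have hi : ∀ i j, Integrable fun x => u i * u j * (f x * (x i * x j)) :=
      fun i j => (hi₁₁ i j).const_mul _
    simp only [hexpand]
    rw [integral_finsetSum _ fun i _ => integrable_finsetSum _ fun j _ => hi i j,
      EuclideanSpace.real_norm_sq_eq]
    refine Finset.sum_congr rfl fun i _ => ?_
    rw [integral_finsetSum _ fun j _ => hi i j]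
    simp [integral_const_mul, hcov, sq]

end IsIsotropicDensity

theorem one_add_exp_one_mul_two_pow_mul_le (d : ℕ) :
    (1 + Real.exp 1 * 2 ^ d) * (d + 1) ≤ (2 ^ (d + 2) * (d + 1) : ℝ) ^ 2 / 2 := by
  have hpow : (1 : ℝ) ≤ 2 ^ d := one_le_pow₀ one_le_two
  have hprod : (1 : ℝ) ≤ 2 ^ d * (d + 1) := one_le_mul_of_one_le_of_one_le hpow (by simp)
  have he := Real.exp_one_lt_three
  calc (1 + Real.exp 1 * 2 ^ d) * (d + 1) ≤ (2 ^ d + 3 * 2 ^ d) * (d + 1 : ℝ) := by gcongr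
    _ = 4 * (2 ^ d * (d + 1)) := by ring
    _ ≤ 8 * (2 ^ d * (d + 1)) ^ 2 := by nlinarith
    _ = (2 ^ (d + 2) * (d + 1)) ^ 2 / 2 := by ring

theorem logconcave_isotropic_envelope_general.{u} (d : ℕ) :
    ∃ A B : ℝ, 0 < A ∧ 0 < B ∧
      ∀ (E : Type u) [NormedAddCommGroup E] [InnerProductSpace ℝ E] [FiniteDimensional ℝ E]
        [MeasurableSpace E] [BorelSpace E], finrank ℝ E = d →
        ∀ f : E → ℝ, LogConcave f → IsIsotropicDensity f →
        ∀ x, f x ≤ Real.exp (-A * ‖x‖ + B) := by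
  set C : ℝ := Real.exp 1 * ((d + 1) * 2 ^ (d + 2)) ^ d
  set T : ℝ := 2 ^ (d + 2) * (d + 1)
  have hT : 0 < T := by positivity
  have hC : 1 ≤ C := by
    refine one_le_mul_of_one_le_of_one_le (Real.one_le_exp zero_le_one) (one_le_pow₀ ?_)
    exact one_le_mul_of_one_le_of_one_le (by simp) (one_le_pow₀ one_le_two)
  refine ⟨1 / T, Real.log C + 2, by positivity, by linarith [Real.log_nonneg hC], ?_⟩
  rintro E _ _ _ _ _ rfl f hlc hiso x
  have hfC : ∀ z, f z ≤ C := fun z => hlc.le_exp_one_mul_pow hiso.integral_eq_one fun u hu => by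
    rw [hiso.integral_mul_inner_sub_sq hlc.nonneg, hu]
    linarith [sq_nonneg ⟪z, u⟫_ℝ]
  calc f x ≤ C * Real.exp (2 - ‖x‖ / T) :=
        hlc.le_mul_exp_two_sub_norm_div hiso.integral_eq_one hiso.integrable_mul_norm_sq
          (zero_lt_one.trans_le hC) hfC (Nat.cast_add_one_pos _)
          (by simp [hiso.integral_mul_norm_sq]) hT (one_add_exp_one_mul_two_pow_mul_le _) x
    _ = Real.exp (-(1 / T) * ‖x‖ + (Real.log C + 2)) := by
      rw [← Real.exp_log (zero_lt_one.trans_le hC), ← Real.exp_add, Real.log_exp]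
      ring_nf

/-- There exist `A, B > 0` depending only on `d` such that every upper semi-continuous
log-concave probability density on `ℝ^d` with mean `0` and identity covariance satisfies
`f x ≤ exp(-A‖x‖ + B)` for all `x`. -/
theorem logconcave_isotropic_envelope (d : ℕ) :
    ∃ A B : ℝ, 0 < A ∧ 0 < B ∧
      ∀ f : EuclideanSpace ℝ (Fin d) → ℝ,
        (∀ x, 0 ≤ f x) →
        UpperSemicontinuous f →
        (∀ x y : EuclideanSpace ℝ (Fin d), ∀ a b : ℝ, 0 ≤ a → 0 ≤ b → a + b = 1 →
          f x ^ a * f y ^ b ≤ f (a • x + b • y)) →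
        (∫ x, f x = 1) →
        (∀ i, ∫ x, f x * x i = 0) →
        (∀ i j, ∫ x, f x * (x i * x j) = if i = j then (1 : ℝ) else 0) →
        ∀ x, f x ≤ Real.exp (-A * ‖x‖ + B) := by
  obtain ⟨A, B, hA, hB, h⟩ := logconcave_isotropic_envelope_general d
  exact ⟨A, B, hA, hB, fun f hf0 _ hlc hmass hmean hcov =>
    h _ finrank_euclideanSpace_fin f ⟨hf0, hlc⟩ (.of_coordinates hf0 hmass hmean hcov)⟩
end

section
/- There exists a constant c > 0 (depending only on d) such that every upper semi-continuous log-concave probability density f on ℝ^d with mean 0 and identity covariance satisfies f(x) ≥ c for all x with ‖x‖ ≤ 1/4. -/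
/-!
By the Prékopa–Leindler inequality the measure `f dμ` is log-concave, and so are its
one-dimensional marginals, which are again isotropic. The tail function of a log-concave measure
on the line is log-concave, so about any point its moments on one side obey
`m₀ * m₂ ≤ 2 * m₁ ^ 2`, as for an exponential distribution; together with the isotropy this bounds
the mass of every half-line `[r, ∞)`, `r < 1`, below by `(1 - r) ^ 2 / 256`. If now `f x < c` with
`‖x‖ < r`, then a hyperplane through `x` supports the convex set `{y | c ≤ f y}`, and `f < c` on a
half-space whose mass is at least `(1 - r) ^ 2 / 256`. But `f < c` makes the mass of that half-space
inside a large ball small, and Chebyshev's inequality controls the rest, so `c` cannot be too small.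
-/

open MeasureTheory Set Filter Topology Module
open scoped ENNReal Pointwise RealInnerProductSpace

section BrunnMinkowski

theorem volume_add_volume_le_of_isCompact {K L : Set ℝ} (hK : IsCompact K) (hL : IsCompact L)
    (hK₀ : K.Nonempty) (hL₀ : L.Nonempty) : volume K + volume L ≤ volume (K + L) := by
  obtain ⟨k, hk, hk_max⟩ := hK.exists_isGreatest hK₀
  obtain ⟨l, hl, hl_min⟩ := hL.exists_isLeast hL₀
  have hmeas : MeasurableSet (k +ᵥ L) := (hL.vadd k).measurableSet
  -- `l + K` lies to the left of `k + l` and `k + L` to the right, so they do not overlap.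
  have hinter : volume ((l +ᵥ K) ∩ (k +ᵥ L)) = 0 := by
    refine measure_mono_null (t := {k + l}) ?_ Real.volume_singleton
    rintro _ ⟨⟨x, hx, rfl⟩, y, hy, hxy⟩
    have hxk := hk_max hx
    have hly := hl_min hy
    simp only [vadd_eq_add, mem_singleton_iff] at hxy ⊢
    linarith
  have hunion := measure_union_add_inter (μ := volume) (l +ᵥ K) hmeas
  rw [hinter, add_zero, measure_vadd, measure_vadd] at hunion
  rw [← hunion]
  refine measure_mono (union_subset ?_ ?_)
  · rintro _ ⟨x, hx, rfl⟩
    exact ⟨x, hx, l, hl, add_comm x l⟩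
  · rintro _ ⟨y, hy, rfl⟩
    exact add_mem_add hk hy

theorem volume_add_volume_le {A B : Set ℝ} (hA : MeasurableSet A) (hB : MeasurableSet B)
    (hA₀ : A.Nonempty) (hB₀ : B.Nonempty) : volume A + volume B ≤ volume (A + B) := by
  obtain ⟨x, hx⟩ := hA₀
  obtain ⟨y, hy⟩ := hB₀
  rw [hA.measure_eq_iSup_isCompact, hB.measure_eq_iSup_isCompact]
  simp only [iSup_and']
  refine ENNReal.biSup_add_biSup_le' ⟨∅, by simp⟩ ⟨∅, by simp⟩ fun K ⟨hKA, hK⟩ L ⟨hLB, hL⟩ ↦ ?_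
  calc volume K + volume L
      ≤ volume (insert x K) + volume (insert y L) := by gcongr <;> exact subset_insert _ _
    _ ≤ volume (insert x K + insert y L) :=
      volume_add_volume_le_of_isCompact (hK.insert x) (hL.insert y)
        (insert_nonempty x K) (insert_nonempty y L)
    _ ≤ volume (A + B) :=
      measure_mono (add_subset_add (insert_subset hx hKA) (insert_subset hy hLB))

theorem ofReal_mul_volume_add_le {A B C : Set ℝ} {a b : ℝ} (ha : 0 < a) (hb : 0 < b)
    (hA : MeasurableSet A) (hB : MeasurableSet B) (hA₀ : A.Nonempty) (hB₀ : B.Nonempty)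
    (hC : ∀ x ∈ A, ∀ y ∈ B, a * x + b * y ∈ C) :
    ENNReal.ofReal a * volume A + ENNReal.ofReal b * volume B ≤ volume C := by
  have hvol : ∀ {t : ℝ} (S : Set ℝ), 0 < t → volume (t • S) = ENNReal.ofReal t * volume S := by
    intro t S ht
    rw [Measure.addHaar_smul, finrank_self, pow_one, abs_of_pos ht]
  rw [← hvol A ha, ← hvol B hb]
  refine (volume_add_volume_le (hA.const_smul₀ a) (hB.const_smul₀ b) hA₀.smul_set
    hB₀.smul_set).trans (measure_mono ?_)
  rintro _ ⟨_, ⟨x, hx, rfl⟩, _, ⟨y, hy, rfl⟩, rfl⟩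
  exact hC x hx y hy

end BrunnMinkowski

section PrekopaLeindler

theorem lintegral_eq_setLIntegral_Ioo_meas_lt {α : Type*} [MeasurableSpace α] (μ : Measure α)
    {f : α → ℝ≥0∞} (hf : AEMeasurable f μ) (hf_le : ∀ x, f x ≤ 1) :
    ∫⁻ x, f x ∂μ = ∫⁻ t in Ioo (0 : ℝ) 1, μ {x | ENNReal.ofReal t < f x} := by
  have hf_top : ∀ x, f x ≠ ∞ := fun x ↦ ((hf_le x).trans_lt ENNReal.one_lt_top).ne
  have hlayer := lintegral_eq_lintegral_meas_lt μ (f := fun x ↦ (f x).toReal)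
    (Eventually.of_forall fun x ↦ ENNReal.toReal_nonneg) hf.ennreal_toReal
  have hlevel : ∀ t ∈ Ioi (0 : ℝ),
      μ {x | t < (f x).toReal} = μ {x | ENNReal.ofReal t < f x} := fun t ht ↦ by
    simp only [ENNReal.ofReal_lt_iff_lt_toReal (le_of_lt ht) (hf_top _)]
  have htail : ∫⁻ t in Ici (1 : ℝ), μ {x | ENNReal.ofReal t < f x} = 0 := by
    refine (setLIntegral_congr_fun measurableSet_Ici fun t ht ↦ ?_).trans lintegral_zero
    have hempty : {x | ENNReal.ofReal t < f x} = ∅ :=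
      eq_empty_of_forall_notMem fun x ↦
        not_lt.2 ((hf_le x).trans (ENNReal.one_le_ofReal.2 ht))
    rw [hempty, measure_empty]
  simp only [ENNReal.ofReal_toReal (hf_top _)] at hlayer
  rw [hlayer, setLIntegral_congr_fun measurableSet_Ioi hlevel, ← Ioo_union_Ici_eq_Ioi zero_lt_one,
    lintegral_union measurableSet_Ici
      (disjoint_left.2 fun _ ht ht' ↦ (not_le.2 ht.2) ht'), htail, add_zero]

theorem rpow_mul_rpow_le_ofReal_mul_add {a b : ℝ} (ha : 0 < a) (hb : 0 < b) (hab : a + b = 1)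
    (x y : ℝ≥0∞) : x ^ a * y ^ b ≤ ENNReal.ofReal a * x + ENNReal.ofReal b * y := by
  have hconj : a⁻¹.HolderConjugate b⁻¹ :=
    Real.holderConjugate_iff.2 ⟨(one_lt_inv₀ ha).2 (by linarith), by simpa using hab⟩
  have hyoung := ENNReal.young_inequality (x ^ a) (y ^ b) hconj
  rwa [ENNReal.rpow_rpow_inv ha.ne', ENNReal.rpow_rpow_inv hb.ne', ENNReal.ofReal_inv_of_pos ha,
    ENNReal.ofReal_inv_of_pos hb, ENNReal.div_eq_inv_mul, ENNReal.div_eq_inv_mul, inv_inv,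
    inv_inv] at hyoung

theorem measurable_measure_setOf_ofReal_lt {α : Type*} [MeasurableSpace α] (μ : Measure α)
    (f : α → ℝ≥0∞) : Measurable fun t : ℝ ↦ μ {x | ENNReal.ofReal t < f x} :=
  Antitone.measurable fun _ _ hst ↦
    measure_mono fun _ hx ↦ (ENNReal.ofReal_le_ofReal hst).trans_lt hx

variable {f g h : ℝ → ℝ≥0∞} {a b : ℝ}

theorem ofReal_mul_lintegral_add_le_of_iSup_eq_one (ha : 0 < a) (hb : 0 < b) (hab : a + b = 1)
    (hf : Measurable f) (hg : Measurable g) (hh : Measurable h)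
    (hf_sup : ⨆ x, f x = 1) (hg_sup : ⨆ x, g x = 1)
    (hfgh : ∀ x y, f x ^ a * g y ^ b ≤ h (a * x + b * y)) :
    ENNReal.ofReal a * (∫⁻ x, f x) + ENNReal.ofReal b * (∫⁻ x, g x) ≤ ∫⁻ x, h x := by
  refine le_trans ?_ (lintegral_mono fun x ↦ min_le_left (h x) 1)
  rw [lintegral_eq_setLIntegral_Ioo_meas_lt _ hf.aemeasurable fun x ↦ hf_sup ▸ le_iSup f x,
    lintegral_eq_setLIntegral_Ioo_meas_lt _ hg.aemeasurable fun x ↦ hg_sup ▸ le_iSup g x,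
    lintegral_eq_setLIntegral_Ioo_meas_lt _ (hh.min measurable_const).aemeasurable
      fun x ↦ min_le_right (h x) 1,
    ← lintegral_const_mul _ (measurable_measure_setOf_ofReal_lt _ f),
    ← lintegral_const_mul _ (measurable_measure_setOf_ofReal_lt _ g),
    ← lintegral_add_left ((measurable_measure_setOf_ofReal_lt _ f).const_mul _)]
  refine setLIntegral_mono' measurableSet_Ioo fun t ht ↦ ?_
  have ht_lt : ENNReal.ofReal t < 1 := ENNReal.ofReal_lt_one.2 ht.2
  obtain ⟨x₀, hx₀⟩ := lt_iSup_iff.1 (ht_lt.trans_eq hf_sup.symm)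
  obtain ⟨y₀, hy₀⟩ := lt_iSup_iff.1 (ht_lt.trans_eq hg_sup.symm)
  refine ofReal_mul_volume_add_le ha hb (measurableSet_lt measurable_const hf)
    (measurableSet_lt measurable_const hg) ⟨x₀, hx₀⟩ ⟨y₀, hy₀⟩
    fun x hx y hy ↦ lt_min (lt_of_lt_of_le ?_ (hfgh x y)) ht_lt
  calc ENNReal.ofReal t = ENNReal.ofReal t ^ a * ENNReal.ofReal t ^ b := by
        rw [← ENNReal.rpow_add_of_nonneg _ _ ha.le hb.le, hab, ENNReal.rpow_one]
    _ < f x ^ a * g y ^ b :=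
      ENNReal.mul_lt_mul (ENNReal.rpow_lt_rpow hx ha) (ENNReal.rpow_lt_rpow hy hb)

theorem lintegral_rpow_mul_le_of_iSup_ne_top (ha : 0 < a) (hb : 0 < b) (hab : a + b = 1)
    (hf : Measurable f) (hg : Measurable g) (hh : Measurable h)
    (hf_top : ⨆ x, f x ≠ ∞) (hg_top : ⨆ x, g x ≠ ∞)
    (hfgh : ∀ x y, f x ^ a * g y ^ b ≤ h (a * x + b * y)) :
    (∫⁻ x, f x) ^ a * (∫⁻ x, g x) ^ b ≤ ∫⁻ x, h x := by
  set F := ⨆ x, f x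
  set G := ⨆ x, g x
  rcases eq_or_ne F 0 with hF₀ | hF₀
  · have hf₀ : ∀ x, f x = 0 := ENNReal.iSup_eq_zero.1 hF₀
    simp [hf₀, ha]
  rcases eq_or_ne G 0 with hG₀ | hG₀
  · have hg₀ : ∀ x, g x = 0 := ENNReal.iSup_eq_zero.1 hG₀
    simp [hg₀, hb]
  have hnormalized := ofReal_mul_lintegral_add_le_of_iSup_eq_one ha hb hab (hf.const_mul F⁻¹)
    (hg.const_mul G⁻¹) (hh.const_mul (F⁻¹ ^ a * G⁻¹ ^ b))
    (by rw [← ENNReal.mul_iSup, ENNReal.inv_mul_cancel hF₀ hf_top])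
    (by rw [← ENNReal.mul_iSup, ENNReal.inv_mul_cancel hG₀ hg_top]) fun x y ↦ by
      rw [ENNReal.mul_rpow_of_nonneg _ _ ha.le, ENNReal.mul_rpow_of_nonneg _ _ hb.le,
        mul_mul_mul_comm]
      gcongr
      exact hfgh x y
  have hscaled := (rpow_mul_rpow_le_ofReal_mul_add ha hb hab _ _).trans hnormalized
  rw [lintegral_const_mul _ hf, lintegral_const_mul _ hg, lintegral_const_mul _ hh,
    ENNReal.mul_rpow_of_nonneg _ _ ha.le, ENNReal.mul_rpow_of_nonneg _ _ hb.le,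
    mul_mul_mul_comm] at hscaled
  refine (ENNReal.mul_le_mul_iff_right ?_ ?_).1 hscaled
  · simp [hf_top, hg_top, hF₀, hG₀, ha]
  · exact ENNReal.mul_ne_top (ENNReal.rpow_ne_top_of_nonneg ha.le (ENNReal.inv_ne_top.2 hF₀))
      (ENNReal.rpow_ne_top_of_nonneg hb.le (ENNReal.inv_ne_top.2 hG₀))

theorem tendsto_lintegral_min_natCast {α : Type*} [MeasurableSpace α] (μ : Measure α)
    {f : α → ℝ≥0∞} (hf : AEMeasurable f μ) :
    Tendsto (fun n : ℕ ↦ ∫⁻ x, min (f x) n ∂μ) atTop (𝓝 (∫⁻ x, f x ∂μ)) := by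
  refine lintegral_tendsto_of_tendsto_of_monotone (fun n ↦ hf.min aemeasurable_const)
    (Eventually.of_forall fun x m n hmn ↦ by dsimp only; gcongr) (Eventually.of_forall fun x ↦ ?_)
  simpa using tendsto_const_nhds (x := f x).min ENNReal.tendsto_nat_nhds_top

theorem lintegral_rpow_mul_le_lintegral (ha : 0 < a) (hb : 0 < b) (hab : a + b = 1)
    (hf : Measurable f) (hg : Measurable g) (hh : Measurable h)
    (hfgh : ∀ x y, f x ^ a * g y ^ b ≤ h (a * x + b * y)) :
    (∫⁻ x, f x) ^ a * (∫⁻ x, g x) ^ b ≤ ∫⁻ x, h x := by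
  rcases eq_or_ne (∫⁻ x, f x) 0 with hf₀ | hf₀
  · simp [hf₀, ha]
  rcases eq_or_ne (∫⁻ x, g x) 0 with hg₀ | hg₀
  · simp [hg₀, hb]
  have hf_lim := (tendsto_lintegral_min_natCast volume hf.aemeasurable).ennrpow_const a
  have hg_lim := (tendsto_lintegral_min_natCast volume hg.aemeasurable).ennrpow_const b
  have hbdd : ∀ (k : ℝ → ℝ≥0∞) (n : ℕ), ⨆ x, min (k x) n ≠ ∞ := fun k n ↦
    ((iSup_le fun _ ↦ min_le_right _ _).trans_lt (ENNReal.natCast_lt_top n)).ne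
  refine le_of_tendsto' (ENNReal.Tendsto.mul hf_lim (.inl (by simp [hf₀, ha.le]))
    hg_lim (.inl (by simp [hg₀, hb.le]))) fun n ↦ ?_
  refine lintegral_rpow_mul_le_of_iSup_ne_top ha hb hab (hf.min measurable_const)
    (hg.min measurable_const) hh (hbdd f n) (hbdd g n) fun x y ↦ le_trans ?_ (hfgh x y)
  gcongr <;> exact min_le_left _ _

end PrekopaLeindler

section LogConcave

variable {E F : Type*} [AddCommGroup E] [Module ℝ E] [AddCommGroup F] [Module ℝ F]

/-- Log-concave functions `f : E → ℝ`, i.e. `f = exp φ` with `φ` concave and possibly `-∞`. -/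
structure IsLogConcave (f : E → ℝ) : Prop where
  nonneg : ∀ x, 0 ≤ f x
  rpow_mul_rpow_le : ∀ ⦃a b : ℝ⦄, 0 < a → 0 < b → a + b = 1 →
    ∀ x y, f x ^ a * f y ^ b ≤ f (a • x + b • y)

theorem IsLogConcave.convex_superlevel {f : E → ℝ} (hf : IsLogConcave f) {c : ℝ} (hc : 0 < c) :
    Convex ℝ {x | c ≤ f x} := by
  refine convex_iff_forall_pos.2 fun x hx y hy a b ha hb hab ↦ ?_
  calc c = c ^ a * c ^ b := by rw [← Real.rpow_add hc, hab, Real.rpow_one]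
    _ ≤ f x ^ a * f y ^ b :=
      mul_le_mul (Real.rpow_le_rpow hc.le hx ha.le) (Real.rpow_le_rpow hc.le hy hb.le)
        (by positivity) (Real.rpow_nonneg (hf.nonneg x) a)
    _ ≤ f (a • x + b • y) := hf.rpow_mul_rpow_le ha hb hab x y

variable [MeasurableSpace E] [MeasurableSpace F]

/-- Log-concave measures, encoded as the measures satisfying the Prékopa–Leindler inequality.
On indicator functions this is Borell's condition `μ A ^ a * μ B ^ b ≤ μ (a • A + b • B)`; the
functional form is the one that visibly passes to products. -/
def IsLogConcaveMeasure (μ : Measure E) : Prop :=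
  ∀ ⦃a b : ℝ⦄, 0 < a → 0 < b → a + b = 1 →
    ∀ ⦃f g h : E → ℝ≥0∞⦄, Measurable f → Measurable g → Measurable h →
      (∀ x y, f x ^ a * g y ^ b ≤ h (a • x + b • y)) →
      (∫⁻ x, f x ∂μ) ^ a * (∫⁻ x, g x ∂μ) ^ b ≤ ∫⁻ x, h x ∂μ

theorem isLogConcaveMeasure_volume_real : IsLogConcaveMeasure (volume : Measure ℝ) :=
  fun _ _ ha hb hab _ _ _ hf hg hh hfgh ↦ lintegral_rpow_mul_le_lintegral ha hb hab hf hg hh hfgh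

theorem isLogConcaveMeasure_dirac_zero : IsLogConcaveMeasure (Measure.dirac (0 : E)) := by
  intro a b _ _ _ f g h hf hg hh hfgh
  simpa only [lintegral_dirac' _ hf, lintegral_dirac' _ hg, lintegral_dirac' _ hh, smul_zero,
    add_zero] using hfgh 0 0

theorem exists_measurable_ge_lintegral_eq {α : Type*} [MeasurableSpace α] {μ : Measure α}
    {f : α → ℝ≥0∞} (hf : AEMeasurable f μ) :
    ∃ g, Measurable g ∧ f ≤ g ∧ ∫⁻ x, g x ∂μ = ∫⁻ x, f x ∂μ := by
  obtain ⟨k, hk, hfk⟩ := hf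
  obtain ⟨t, hfkt, ht, ht₀⟩ := exists_measurable_superset_of_null hfk
  refine ⟨fun x ↦ k x + t.indicator (fun _ ↦ ∞) x, hk.add (measurable_const.indicator ht),
    fun x ↦ ?_, ?_⟩
  · by_cases hx : x ∈ t
    · simp [hx]
    · have hfx : f x = k x := not_not.1 fun hne ↦ hx (hfkt hne)
      simp [hx, hfx]
  · rw [lintegral_add_left hk, lintegral_indicator_const ht, ht₀, mul_zero, add_zero,
      lintegral_congr_ae hfk]

namespace IsLogConcaveMeasure

variable {μ : Measure E} {ν : Measure F} {a b : ℝ}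

theorem lintegral_rpow_mul_le₀ (hμ : IsLogConcaveMeasure μ) (ha : 0 < a) (hb : 0 < b)
    (hab : a + b = 1) {f g h : E → ℝ≥0∞} (hh : AEMeasurable h μ)
    (hfgh : ∀ x y, f x ^ a * g y ^ b ≤ h (a • x + b • y)) :
    (∫⁻ x, f x ∂μ) ^ a * (∫⁻ x, g x ∂μ) ^ b ≤ ∫⁻ x, h x ∂μ := by
  obtain ⟨f', hf', hf'_le, hf'_eq⟩ := exists_measurable_le_lintegral_eq μ f
  obtain ⟨g', hg', hg'_le, hg'_eq⟩ := exists_measurable_le_lintegral_eq μ g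
  obtain ⟨h', hh', hh'_ge, hh'_eq⟩ := exists_measurable_ge_lintegral_eq hh
  rw [hf'_eq, hg'_eq, ← hh'_eq]
  refine hμ ha hb hab hf' hg' hh' fun x y ↦ ?_
  calc f' x ^ a * g' y ^ b ≤ f x ^ a * g y ^ b := by
        gcongr
        exacts [hf'_le x, hg'_le y]
    _ ≤ h (a • x + b • y) := hfgh x y
    _ ≤ h' (a • x + b • y) := hh'_ge _

theorem measure_rpow_mul_le (hμ : IsLogConcaveMeasure μ) (ha : 0 < a) (hb : 0 < b)
    (hab : a + b = 1) {A B C : Set E} (hA : MeasurableSet A) (hB : MeasurableSet B)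
    (hC : MeasurableSet C) (hABC : ∀ x ∈ A, ∀ y ∈ B, a • x + b • y ∈ C) :
    μ A ^ a * μ B ^ b ≤ μ C := by
  rw [← lintegral_indicator_one hA, ← lintegral_indicator_one hB, ← lintegral_indicator_one hC]
  refine hμ ha hb hab (measurable_one.indicator hA) (measurable_one.indicator hB)
    (measurable_one.indicator hC) fun x y ↦ ?_
  by_cases hx : x ∈ A
  · by_cases hy : y ∈ B
    · simp [hx, hy, hABC x hx y hy]
    · simp [hy, hb]
  · simp [hx, ha]

theorem prod [SFinite ν] (hμ : IsLogConcaveMeasure μ) (hν : IsLogConcaveMeasure ν) :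
    IsLogConcaveMeasure (μ.prod ν) := by
  intro a b ha hb hab f g h hf hg hh hfgh
  rw [lintegral_prod f hf.aemeasurable, lintegral_prod g hg.aemeasurable,
    lintegral_prod h hh.aemeasurable]
  refine hμ ha hb hab hf.lintegral_prod_right' hg.lintegral_prod_right' hh.lintegral_prod_right'
    fun x x' ↦ hν ha hb hab ?_ ?_ ?_ fun y y' ↦ hfgh (x, y) (x', y')
  exacts [hf.comp measurable_prodMk_left, hg.comp measurable_prodMk_left,
    hh.comp measurable_prodMk_left]

theorem map (hμ : IsLogConcaveMeasure μ) {L : E →ₗ[ℝ] F} (hL : Measurable L) :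
    IsLogConcaveMeasure (μ.map L) := by
  intro a b ha hb hab f g h hf hg hh hfgh
  rw [lintegral_map hf hL, lintegral_map hg hL, lintegral_map hh hL]
  refine hμ ha hb hab (hf.comp hL) (hg.comp hL) (hh.comp hL) fun x y ↦ ?_
  rw [map_add, map_smul, map_smul]
  exact hfgh (L x) (L y)

theorem smul (hμ : IsLogConcaveMeasure μ) (c : ℝ≥0∞) : IsLogConcaveMeasure (c • μ) := by
  intro a b ha hb hab f g h hf hg hh hfgh
  simp only [lintegral_smul_measure, smul_eq_mul]
  calc (c * ∫⁻ x, f x ∂μ) ^ a * (c * ∫⁻ x, g x ∂μ) ^ b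
      = c ^ a * c ^ b * ((∫⁻ x, f x ∂μ) ^ a * (∫⁻ x, g x ∂μ) ^ b) := by
        rw [ENNReal.mul_rpow_of_nonneg _ _ ha.le, ENNReal.mul_rpow_of_nonneg _ _ hb.le,
          mul_mul_mul_comm]
    _ = c * ((∫⁻ x, f x ∂μ) ^ a * (∫⁻ x, g x ∂μ) ^ b) := by
        rw [← ENNReal.rpow_add_of_nonneg _ _ ha.le hb.le, hab, ENNReal.rpow_one]
    _ ≤ c * ∫⁻ x, h x ∂μ := by
        gcongr
        exact hμ ha hb hab hf hg hh hfgh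

theorem withDensity (hμ : IsLogConcaveMeasure μ) {φ : E → ℝ≥0∞} (hφ : AEMeasurable φ μ)
    (hφ_le : ∀ ⦃a b : ℝ⦄, 0 < a → 0 < b → a + b = 1 →
      ∀ x y, φ x ^ a * φ y ^ b ≤ φ (a • x + b • y)) :
    IsLogConcaveMeasure (μ.withDensity φ) := by
  intro a b ha hb hab f g h hf hg hh hfgh
  rw [lintegral_withDensity_eq_lintegral_mul₀ hφ hf.aemeasurable,
    lintegral_withDensity_eq_lintegral_mul₀ hφ hg.aemeasurable,
    lintegral_withDensity_eq_lintegral_mul₀ hφ hh.aemeasurable]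
  refine hμ.lintegral_rpow_mul_le₀ ha hb hab (hφ.mul hh.aemeasurable) fun x y ↦ ?_
  simp only [Pi.mul_apply]
  rw [ENNReal.mul_rpow_of_nonneg _ _ ha.le, ENNReal.mul_rpow_of_nonneg _ _ hb.le,
    mul_mul_mul_comm]
  exact mul_le_mul' (hφ_le ha hb hab x y) (hfgh x y)

theorem withDensity_ofReal (hμ : IsLogConcaveMeasure μ) {f : E → ℝ} (hf : IsLogConcave f)
    (hf_meas : AEMeasurable f μ) :
    IsLogConcaveMeasure (μ.withDensity fun x ↦ ENNReal.ofReal (f x)) := by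
  refine hμ.withDensity hf_meas.ennreal_ofReal fun a b ha hb hab x y ↦ ?_
  rw [ENNReal.ofReal_rpow_of_nonneg (hf.nonneg x) ha.le,
    ENNReal.ofReal_rpow_of_nonneg (hf.nonneg y) hb.le,
    ← ENNReal.ofReal_mul (Real.rpow_nonneg (hf.nonneg x) a)]
  exact ENNReal.ofReal_le_ofReal (hf.rpow_mul_rpow_le ha hb hab x y)

end IsLogConcaveMeasure

theorem isLogConcaveMeasure_volume_pi (n : ℕ) :
    IsLogConcaveMeasure (volume : Measure (Fin n → ℝ)) := by
  induction n with
  | zero =>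
    rw [Measure.volume_pi_eq_dirac 0]
    exact isLogConcaveMeasure_dirac_zero
  | succ n ih =>
    have hcons : MeasurePreserving (Fin.consEquivL ℝ fun _ : Fin (n + 1) ↦ ℝ) := by
      convert (volume_preserving_piFinSuccAbove (fun _ : Fin (n + 1) ↦ ℝ) 0).symm
      ext p i
      simp [MeasurableEquiv.piFinSuccAbove, Fin.insertNthEquiv]
    rw [← hcons.map_eq]
    exact (isLogConcaveMeasure_volume_real.prod ih).map
      (L := (Fin.consEquivL ℝ fun _ : Fin (n + 1) ↦ ℝ).toLinearMap) hcons.measurable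

theorem isLogConcaveMeasure_of_isAddHaarMeasure {E : Type*} [NormedAddCommGroup E]
    [NormedSpace ℝ E] [FiniteDimensional ℝ E] [MeasurableSpace E] [BorelSpace E]
    (μ : Measure E) [μ.IsAddHaarMeasure] : IsLogConcaveMeasure μ := by
  let L : (Fin (finrank ℝ E) → ℝ) ≃L[ℝ] E := (finBasis ℝ E).equivFunL.symm
  rw [Measure.isAddLeftInvariant_eq_smul μ (volume.map L)]
  exact ((isLogConcaveMeasure_volume_pi _).map (L := L.toLinearMap)
    L.continuous.measurable).smul (μ.addHaarScalarFactor (volume.map L) : ℝ≥0∞)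

end LogConcave

section Tails

variable {ν : Measure ℝ}

theorem ofReal_posPart (x : ℝ) : ENNReal.ofReal x⁺ = ENNReal.ofReal x := by
  rw [posPart_def, ENNReal.ofReal_max, ENNReal.ofReal_zero, max_eq_left zero_le]

theorem lintegral_ofReal_sub (ν : Measure ℝ) (r : ℝ) :
    ∫⁻ x, ENNReal.ofReal (x - r) ∂ν = ∫⁻ t in Ioi (0 : ℝ), ν (Ici (r + t)) := by
  have hlayer := lintegral_eq_lintegral_meas_le ν (f := fun x ↦ (x - r)⁺)
    (Eventually.of_forall fun x ↦ posPart_nonneg _) (by fun_prop)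
  simp only [ofReal_posPart] at hlayer
  rw [hlayer]
  refine setLIntegral_congr_fun measurableSet_Ioi fun t ht ↦ congrArg ν ?_
  ext x
  simp [posPart_def, not_le.2 (mem_Ioi.1 ht), le_sub_iff_add_le']

theorem ofReal_sq_eq_two_mul_setLIntegral (y : ℝ) :
    ENNReal.ofReal y ^ 2 = 2 * ∫⁻ t in Ioi (0 : ℝ), ENNReal.ofReal (y - t) := by
  have hzero : ∀ {s : Set ℝ}, MeasurableSet s → (∀ t ∈ s, y ≤ t) →
      ∫⁻ t in s, ENNReal.ofReal (y - t) = 0 := fun hs hys ↦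
    (setLIntegral_congr_fun hs fun t ht ↦
      ENNReal.ofReal_of_nonpos (sub_nonpos.2 (hys t ht))).trans lintegral_zero
  rcases le_total y 0 with hy | hy
  · rw [hzero measurableSet_Ioi fun t ht ↦ hy.trans (le_of_lt ht), ENNReal.ofReal_of_nonpos hy]
    simp
  have hint : ∫ t in (0 : ℝ)..y, (y - t) = y ^ 2 / 2 := by
    rw [intervalIntegral.integral_sub intervalIntegrable_const
      intervalIntegral.intervalIntegrable_id, intervalIntegral.integral_const, integral_id,
      smul_eq_mul]
    ring
  have hnonneg : 0 ≤ᵐ[volume.restrict (Ioc 0 y)] fun t ↦ y - t :=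
    ae_restrict_of_forall_mem measurableSet_Ioc fun t ht ↦ sub_nonneg.2 ht.2
  rw [← Ioc_union_Ioi_eq_Ioi hy, lintegral_union measurableSet_Ioi
      (disjoint_left.2 fun _ ht ht' ↦ (not_lt.2 ht.2) ht'),
    hzero measurableSet_Ioi fun t ht ↦ le_of_lt ht, add_zero,
    ← ofReal_integral_eq_lintegral_ofReal (by fun_prop : Continuous _).integrableOn_Ioc hnonneg,
    ← intervalIntegral.integral_of_le hy, hint, ← ENNReal.ofReal_pow hy,
    ← ENNReal.ofReal_ofNat 2, ← ENNReal.ofReal_mul zero_le_two, mul_div_cancel₀ _ two_ne_zero]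

theorem lintegral_ofReal_sub_sq (ν : Measure ℝ) [SFinite ν] (r : ℝ) :
    ∫⁻ x, ENNReal.ofReal (x - r) ^ 2 ∂ν =
      2 * ∫⁻ t in Ioi (0 : ℝ), ∫⁻ x, ENNReal.ofReal (x - (r + t)) ∂ν := by
  have hmeas : Measurable fun p : ℝ × ℝ ↦ ENNReal.ofReal (p.1 - r - p.2) := by fun_prop
  simp only [ofReal_sq_eq_two_mul_setLIntegral, ← sub_sub]
  rw [lintegral_const_mul _ hmeas.lintegral_prod_right',
    lintegral_lintegral_swap hmeas.aemeasurable]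

theorem measurable_measure_Ici_add (ν : Measure ℝ) (r : ℝ) :
    Measurable fun t ↦ ν (Ici (r + t)) :=
  Antitone.measurable fun _ _ hst ↦ measure_mono (Ici_subset_Ici.2 (by gcongr))

theorem measurable_lintegral_ofReal_sub_add (ν : Measure ℝ) (r : ℝ) :
    Measurable fun t ↦ ∫⁻ x, ENNReal.ofReal (x - (r + t)) ∂ν :=
  Antitone.measurable fun _ _ hst ↦ lintegral_mono fun _ ↦ by dsimp only; gcongr

namespace IsLogConcaveMeasure

theorem measure_Ici_rpow_mul_le (hν : IsLogConcaveMeasure ν) {a b : ℝ} (ha : 0 < a) (hb : 0 < b)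
    (hab : a + b = 1) (p q : ℝ) : ν (Ici p) ^ a * ν (Ici q) ^ b ≤ ν (Ici (a * p + b * q)) :=
  hν.measure_rpow_mul_le ha hb hab measurableSet_Ici measurableSet_Ici measurableSet_Ici
    fun _ hx _ hy ↦
      add_le_add (mul_le_mul_of_nonneg_left hx ha.le) (mul_le_mul_of_nonneg_left hy hb.le)

theorem measure_Ici_mul_le (hν : IsLogConcaveMeasure ν) {p q t : ℝ} (hpq : p ≤ q) (ht : 0 ≤ t) :
    ν (Ici p) * ν (Ici (q + t)) ≤ ν (Ici q) * ν (Ici (p + t)) := by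
  rcases hpq.eq_or_lt with rfl | hpq
  · rfl
  rcases ht.eq_or_lt with rfl | ht
  · rw [add_zero, add_zero, mul_comm]
  -- `q` and `p + t` divide the segment from `p` to `q + t` in the ratios `b : a` and `a : b`.
  obtain ⟨a, b, ha, hb, hab, hq, hpt⟩ : ∃ a b : ℝ, 0 < a ∧ 0 < b ∧ a + b = 1 ∧
      a * p + b * (q + t) = q ∧ b * p + a * (q + t) = p + t := by
    have hlen : 0 < q - p + t := by linarith
    refine ⟨t / (q - p + t), (q - p) / (q - p + t), div_pos ht hlen,
      div_pos (sub_pos.2 hpq) hlen, ?_, ?_, ?_⟩ <;> field_simp <;> ring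
  have hsplit : ∀ m : ℝ≥0∞, m = m ^ a * m ^ b := fun m ↦ by
    rw [← ENNReal.rpow_add_of_nonneg _ _ ha.le hb.le, hab, ENNReal.rpow_one]
  calc ν (Ici p) * ν (Ici (q + t))
      = (ν (Ici p) ^ a * ν (Ici (q + t)) ^ b) * (ν (Ici p) ^ b * ν (Ici (q + t)) ^ a) := by
        conv_lhs => rw [hsplit (ν (Ici p)), hsplit (ν (Ici (q + t)))]
        ring
    _ ≤ ν (Ici (a * p + b * (q + t))) * ν (Ici (b * p + a * (q + t))) :=
        mul_le_mul' (hν.measure_Ici_rpow_mul_le ha hb hab p (q + t))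
          (hν.measure_Ici_rpow_mul_le hb ha (by rwa [add_comm]) p (q + t))
    _ = ν (Ici q) * ν (Ici (p + t)) := by rw [hq, hpt]

theorem measure_Ici_mul_lintegral_le (hν : IsLogConcaveMeasure ν) {p q t : ℝ} (hpq : p ≤ q)
    (ht : 0 ≤ t) :
    ν (Ici p) * ∫⁻ x, ENNReal.ofReal (x - (q + t)) ∂ν ≤
      ν (Ici q) * ∫⁻ x, ENNReal.ofReal (x - (p + t)) ∂ν := by
  rw [lintegral_ofReal_sub, lintegral_ofReal_sub,
    ← lintegral_const_mul _ (measurable_measure_Ici_add ν _),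
    ← lintegral_const_mul _ (measurable_measure_Ici_add ν _)]
  refine setLIntegral_mono' measurableSet_Ioi fun s hs ↦ ?_
  rw [add_assoc, add_assoc]
  exact hν.measure_Ici_mul_le hpq (add_nonneg ht (le_of_lt hs))

theorem measure_Ici_mul_lintegral_sq_le [SFinite ν] (hν : IsLogConcaveMeasure ν) {p q : ℝ}
    (hpq : p ≤ q) :
    ν (Ici p) * ∫⁻ x, ENNReal.ofReal (x - q) ^ 2 ∂ν ≤
      ν (Ici q) * ∫⁻ x, ENNReal.ofReal (x - p) ^ 2 ∂ν := by
  rw [lintegral_ofReal_sub_sq, lintegral_ofReal_sub_sq, mul_left_comm, mul_left_comm (ν _),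
    ← lintegral_const_mul _ (measurable_lintegral_ofReal_sub_add ν _),
    ← lintegral_const_mul _ (measurable_lintegral_ofReal_sub_add ν _)]
  gcongr 2 * ?_
  exact setLIntegral_mono' measurableSet_Ioi fun t ht ↦
    hν.measure_Ici_mul_lintegral_le hpq (le_of_lt ht)

theorem measure_Ici_mul_lintegral_sq_le_sq [SFinite ν] (hν : IsLogConcaveMeasure ν) (r : ℝ) :
    ν (Ici r) * ∫⁻ x, ENNReal.ofReal (x - r) ^ 2 ∂ν ≤
      2 * (∫⁻ x, ENNReal.ofReal (x - r) ∂ν) ^ 2 := by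
  rw [lintegral_ofReal_sub_sq, mul_left_comm, sq]
  gcongr 2 * ?_
  calc ν (Ici r) * ∫⁻ t in Ioi (0 : ℝ), ∫⁻ x, ENNReal.ofReal (x - (r + t)) ∂ν
      = ∫⁻ t in Ioi (0 : ℝ), ν (Ici r) * ∫⁻ x, ENNReal.ofReal (x - (r + t)) ∂ν :=
        (lintegral_const_mul _ (measurable_lintegral_ofReal_sub_add ν r)).symm
    _ ≤ ∫⁻ t in Ioi (0 : ℝ), ν (Ici (r + t)) * ∫⁻ x, ENNReal.ofReal (x - r) ∂ν := by
        refine setLIntegral_mono' measurableSet_Ioi fun t ht ↦ ?_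
        simpa using hν.measure_Ici_mul_lintegral_le (q := r + t)
          (le_add_of_nonneg_right (le_of_lt ht)) le_rfl
    _ = (∫⁻ x, ENNReal.ofReal (x - r) ∂ν) * ∫⁻ x, ENNReal.ofReal (x - r) ∂ν := by
        rw [lintegral_mul_const _ (measurable_measure_Ici_add ν r), ← lintegral_ofReal_sub]

end IsLogConcaveMeasure

theorem integral_posPart_sub_pow (ν : Measure ℝ) (r : ℝ) (n : ℕ) :
    ∫ x, (x - r)⁺ ^ n ∂ν = (∫⁻ x, ENNReal.ofReal (x - r) ^ n ∂ν).toReal := by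
  rw [integral_eq_lintegral_of_nonneg_ae
    (Eventually.of_forall fun x ↦ pow_nonneg (posPart_nonneg _) n) (by fun_prop)]
  simp only [ENNReal.ofReal_pow (posPart_nonneg _), ofReal_posPart]

theorem memLp_posPart_sub [IsFiniteMeasure ν] {p : ℝ≥0∞} (hν : MemLp id p ν) (r : ℝ) :
    MemLp (fun x ↦ (x - r)⁺) p ν :=
  (hν.sub (memLp_const r)).pos_part

theorem lintegral_ofReal_sub_sq_ne_top [IsFiniteMeasure ν] (hν : MemLp id 2 ν) (r : ℝ) :
    ∫⁻ x, ENNReal.ofReal (x - r) ^ 2 ∂ν ≠ ∞ := by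
  have hint := (memLp_posPart_sub hν r).integrable_sq.lintegral_lt_top
  simp only [ENNReal.ofReal_pow (posPart_nonneg _), ofReal_posPart] at hint
  exact hint.ne

theorem lintegral_ofReal_sub_ne_top [IsFiniteMeasure ν] (hν : MemLp id 1 ν) (r : ℝ) :
    ∫⁻ x, ENNReal.ofReal (x - r) ∂ν ≠ ∞ := by
  have hint := ((memLp_posPart_sub hν r).integrable le_rfl).lintegral_lt_top
  simp only [ofReal_posPart] at hint
  exact hint.ne

namespace IsLogConcaveMeasure

theorem real_Ici_mul_integral_sq_le [IsFiniteMeasure ν] (hν : IsLogConcaveMeasure ν)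
    (hν₂ : MemLp id 2 ν) {p q : ℝ} (hpq : p ≤ q) :
    ν.real (Ici p) * ∫ x, (x - q)⁺ ^ 2 ∂ν ≤ ν.real (Ici q) * ∫ x, (x - p)⁺ ^ 2 ∂ν := by
  simp only [integral_posPart_sub_pow, Measure.real, ← ENNReal.toReal_mul]
  exact ENNReal.toReal_mono
    (ENNReal.mul_ne_top (measure_ne_top _ _) (lintegral_ofReal_sub_sq_ne_top hν₂ p))
    (hν.measure_Ici_mul_lintegral_sq_le hpq)

theorem real_Ici_mul_integral_sq_le_sq [IsFiniteMeasure ν] (hν : IsLogConcaveMeasure ν)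
    (hν₁ : MemLp id 1 ν) (r : ℝ) :
    ν.real (Ici r) * ∫ x, (x - r)⁺ ^ 2 ∂ν ≤ 2 * (∫ x, (x - r)⁺ ∂ν) ^ 2 := by
  have hfirst := integral_posPart_sub_pow ν r 1
  simp only [pow_one] at hfirst
  rw [hfirst, integral_posPart_sub_pow, Measure.real, ← ENNReal.toReal_mul, ← ENNReal.toReal_pow,
    ← ENNReal.toReal_ofNat, ← ENNReal.toReal_mul]
  exact ENNReal.toReal_mono
    (ENNReal.mul_ne_top ENNReal.ofNat_ne_top
      (ENNReal.pow_ne_top (lintegral_ofReal_sub_ne_top hν₁ r)))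
    (hν.measure_Ici_mul_lintegral_sq_le_sq r)

theorem real_Iic_mul_integral_sq_le_sq [IsFiniteMeasure ν] (hν : IsLogConcaveMeasure ν)
    (hν₁ : MemLp id 1 ν) (r : ℝ) :
    ν.real (Iic r) * ∫ x, (r - x)⁺ ^ 2 ∂ν ≤ 2 * (∫ x, (r - x)⁺ ∂ν) ^ 2 := by
  have hneg : Measurable (-LinearMap.id : ℝ →ₗ[ℝ] ℝ) := measurable_neg
  have hmoment : MemLp id 1 (ν.map (-LinearMap.id : ℝ →ₗ[ℝ] ℝ)) :=
    (memLp_map_measure_iff aestronglyMeasurable_id hneg.aemeasurable).2 hν₁.neg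
  have hreflected := (hν.map hneg).real_Ici_mul_integral_sq_le_sq hmoment (-r)
  have hpreimage : (-LinearMap.id : ℝ →ₗ[ℝ] ℝ) ⁻¹' Ici (-r) = Iic r := by ext; simp
  rw [map_measureReal_apply hneg measurableSet_Ici, hpreimage,
    integral_map hneg.aemeasurable (by fun_prop),
    integral_map hneg.aemeasurable (by fun_prop)] at hreflected
  simpa [neg_add_eq_sub] using hreflected

end IsLogConcaveMeasure

end Tails

section Isotropic

theorem sq_integral_le_integral_sq {α : Type*} [MeasurableSpace α] {μ : Measure α}
    [IsProbabilityMeasure μ] {X : α → ℝ} (hX : MemLp X 2 μ) :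
    (∫ x, X x ∂μ) ^ 2 ≤ ∫ x, X x ^ 2 ∂μ := by
  have hvar := ProbabilityTheory.variance_eq_sub hX
  exact sub_nonneg.1 (hvar ▸ ProbabilityTheory.variance_nonneg _ _)

variable {E : Type*} [NormedAddCommGroup E] [InnerProductSpace ℝ E] [MeasurableSpace E]

/-- Isotropic measures: square integrable with mean zero and identity covariance, both moments
being tested against vectors so that no basis is involved. The total mass is not prescribed. -/
structure IsIsotropic (μ : Measure E) : Prop where
  memLp_two : MemLp id 2 μ
  integral_inner : ∀ u : E, ∫ x, ⟪u, x⟫ ∂μ = 0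
  integral_inner_sq : ∀ u : E, ∫ x, ⟪u, x⟫ ^ 2 ∂μ = ‖u‖ ^ 2

namespace IsIsotropic

variable {μ : Measure E}

theorem map_inner [OpensMeasurableSpace E] (hμ : IsIsotropic μ) {u : E} (hu : ‖u‖ = 1) :
    IsIsotropic (μ.map fun x ↦ ⟪u, x⟫) := by
  have hmeas : Measurable fun x : E ↦ ⟪u, x⟫ :=
    Continuous.measurable (continuous_const.inner continuous_id)
  refine ⟨(memLp_map_measure_iff aestronglyMeasurable_id hmeas.aemeasurable).2
    (hμ.memLp_two.const_inner u), fun t ↦ ?_, fun t ↦ ?_⟩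
  · rw [integral_map hmeas.aemeasurable (by fun_prop)]
    simpa [inner_smul_left, mul_comm] using hμ.integral_inner (t • u)
  · rw [integral_map hmeas.aemeasurable (by fun_prop)]
    simpa [inner_smul_left, mul_comm, norm_smul, hu] using hμ.integral_inner_sq (t • u)

theorem integral_norm_sq [FiniteDimensional ℝ E] (hμ : IsIsotropic μ) :
    ∫ x, ‖x‖ ^ 2 ∂μ = finrank ℝ E := by
  let b := stdOrthonormalBasis ℝ E
  calc ∫ x, ‖x‖ ^ 2 ∂μ = ∫ x, ∑ i, ⟪b i, x⟫ ^ 2 ∂μ := by simp [← b.sum_sq_norm_inner_right]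
    _ = ∑ i, ∫ x, ⟪b i, x⟫ ^ 2 ∂μ :=
      integral_finsetSum _ fun i _ ↦ (hμ.memLp_two.const_inner (b i)).integrable_sq
    _ = finrank ℝ E := by simp [hμ.integral_inner_sq]

theorem measureReal_le_norm_le [FiniteDimensional ℝ E] (hμ : IsIsotropic μ) {R : ℝ} (hR : 0 < R) :
    μ.real {x | R ≤ ‖x‖} ≤ finrank ℝ E / R ^ 2 := by
  have hmarkov := mul_meas_ge_le_integral_of_nonneg
    (Eventually.of_forall fun x ↦ sq_nonneg ‖x‖) hμ.memLp_two.norm.integrable_sq (R ^ 2)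
  rw [hμ.integral_norm_sq] at hmarkov
  rw [le_div_iff₀ (by positivity), mul_comm]
  simpa [sq_le_sq₀ hR.le (norm_nonneg _)] using hmarkov

section Real

variable {ν : Measure ℝ}

theorem integral_id (hν : IsIsotropic ν) : ∫ x, x ∂ν = 0 := by
  simpa using hν.integral_inner 1

variable [IsProbabilityMeasure ν]

theorem integrable_id (hν : IsIsotropic ν) : Integrable (fun x ↦ x) ν :=
  hν.memLp_two.integrable one_le_two

theorem integral_sub_sq (hν : IsIsotropic ν) (r : ℝ) : ∫ x, (x - r) ^ 2 ∂ν = 1 + r ^ 2 := by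
  have hsq : ∫ x, x ^ 2 ∂ν = 1 := by simpa using hν.integral_inner_sq 1
  have hsq_int : Integrable (fun x ↦ x ^ 2) ν := hν.memLp_two.integrable_sq
  have hlin_int : Integrable (fun x ↦ 2 * x * r) ν := (hν.integrable_id.const_mul 2).mul_const r
  have hdiff_int : Integrable (fun x ↦ x ^ 2 - 2 * x * r) ν := hsq_int.sub hlin_int
  simp only [sub_sq]
  rw [integral_add hdiff_int (integrable_const _), integral_sub hsq_int hlin_int,
    integral_mul_const, integral_const_mul, hν.integral_id, hsq]
  simp

theorem integral_posPart_sub_rev (hν : IsIsotropic ν) (r : ℝ) :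
    ∫ x, (r - x)⁺ ∂ν = r + ∫ x, (x - r)⁺ ∂ν := by
  have hpos_int : Integrable (fun x ↦ (x - r)⁺) ν :=
    (memLp_posPart_sub hν.memLp_two r).integrable one_le_two
  have hsub_int : Integrable (fun x ↦ x - r) ν := hν.integrable_id.sub (integrable_const r)
  have hsplit : ∀ x : ℝ, (r - x)⁺ = (x - r)⁺ - (x - r) := fun x ↦ by
    rw [← neg_sub x r, posPart_neg, ← sub_sub_cancel (x - r)⁺ (x - r)⁻, posPart_sub_negPart]
  simp only [hsplit]
  rw [integral_sub hpos_int hsub_int, integral_sub hν.integrable_id (integrable_const r),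
    hν.integral_id]
  simp [add_comm]

theorem integral_posPart_sub_rev_sq (hν : IsIsotropic ν) (r : ℝ) :
    ∫ x, (r - x)⁺ ^ 2 ∂ν = 1 + r ^ 2 - ∫ x, (x - r)⁺ ^ 2 ∂ν := by
  have hsq_int : Integrable (fun x ↦ (x - r) ^ 2) ν :=
    (hν.memLp_two.sub (memLp_const r)).integrable_sq
  have hsplit : ∀ x : ℝ, (r - x)⁺ ^ 2 = (x - r) ^ 2 - (x - r)⁺ ^ 2 := fun x ↦ by
    rcases le_total x r with h | h
    · simp [h, posPart_of_nonneg, sub_nonneg.2 h]; ring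
    · simp [h, posPart_of_nonneg, sub_nonneg.2 h]
  simp only [hsplit]
  rw [integral_sub hsq_int (memLp_posPart_sub hν.memLp_two r).integrable_sq, hν.integral_sub_sq]

theorem three_quarters_le_real_Ici (hν : IsIsotropic ν) : 3 / 4 ≤ ν.real (Ici (-2)) := by
  have htail : ν.real (Ici (-2))ᶜ ≤ 1 / 4 :=
    calc ν.real (Ici (-2))ᶜ ≤ ν.real {x | 2 ≤ ‖x‖} := measureReal_mono fun x hx ↦ by
          have hx_lt : x < -2 := not_le.1 hx
          exact le_abs.2 (.inr (le_neg_of_le_neg hx_lt.le))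
      _ ≤ (finrank ℝ ℝ : ℝ) / 2 ^ 2 := hν.measureReal_le_norm_le two_pos
      _ = 1 / 4 := by norm_num
  rw [probReal_compl_eq_one_sub measurableSet_Ici] at htail
  linarith

theorem integral_posPart_sub_sq_le (hν : IsIsotropic ν) (hlc : IsLogConcaveMeasure ν) {r : ℝ}
    (hr : -2 ≤ r) : ∫ x, (x - r)⁺ ^ 2 ∂ν ≤ 7 * ν.real (Ici r) := by
  have hsecond : ∫ x, (x - -2)⁺ ^ 2 ∂ν ≤ 5 :=
    calc ∫ x, (x - -2)⁺ ^ 2 ∂ν ≤ ∫ x, (x - -2) ^ 2 ∂ν := by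
          refine integral_mono (memLp_posPart_sub hν.memLp_two _).integrable_sq
            (hν.memLp_two.sub (memLp_const _)).integrable_sq fun x ↦ ?_
          rw [← sq_abs (x - -2)]
          gcongr
          exact sup_le (le_abs_self _) (abs_nonneg _)
      _ = 5 := by rw [hν.integral_sub_sq]; norm_num
  have hcompare := hlc.real_Ici_mul_integral_sq_le hν.memLp_two hr
  have hmass := hν.three_quarters_le_real_Ici
  have hmoment_nonneg : 0 ≤ ∫ x, (x - r)⁺ ^ 2 ∂ν := integral_nonneg fun x ↦ sq_nonneg _
  have htail_nonneg : 0 ≤ ν.real (Ici r) := measureReal_nonneg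
  nlinarith

/-- The case `ν (Ici r) = 0` carries the idea: then the mass left of `r` has first moment `r` and
second moment `1 + r ^ 2` about `r`, so that `1 + r ^ 2 ≤ 2 * r ^ 2`, contradicting `r < 1`. -/
theorem one_sub_sq_div_le_real_Ici (hν : IsIsotropic ν) (hlc : IsLogConcaveMeasure ν) {r : ℝ}
    (hr₀ : 0 ≤ r) (hr₁ : r < 1) : (1 - r) ^ 2 / 256 ≤ ν.real (Ici r) := by
  by_contra! hsmall
  have hleft := hlc.real_Iic_mul_integral_sq_le_sq (hν.memLp_two.mono_exponent one_le_two) r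
  rw [hν.integral_posPart_sub_rev, hν.integral_posPart_sub_rev_sq] at hleft
  have hcs := sq_integral_le_integral_sq (memLp_posPart_sub hν.memLp_two r)
  have hsecond := hν.integral_posPart_sub_sq_le hlc (by linarith : -2 ≤ r)
  have hfirst_nonneg : 0 ≤ ∫ x, (x - r)⁺ ∂ν := integral_nonneg fun x ↦ posPart_nonneg _
  have htail_nonneg : 0 ≤ ν.real (Ici r) := measureReal_nonneg
  have hmass : 1 - ν.real (Ici r) ≤ ν.real (Iic r) := by
    rw [← probReal_compl_eq_one_sub measurableSet_Ici, compl_Ici]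
    exact measureReal_mono Iio_subset_Iic_self
  set P := ν.real (Ici r)
  set m₁ := ∫ x, (x - r)⁺ ∂ν
  set m₂ := ∫ x, (x - r)⁺ ^ 2 ∂ν
  have hm₁ : m₁ ≤ (1 - r) / 6 := by
    refine le_of_sq_le_sq ?_ (by linarith)
    nlinarith
  have hm₂ : m₂ ≤ 1 := by nlinarith
  have hupper : (1 - P) * (1 + r ^ 2 - m₂) ≤ 2 * (r + m₁) ^ 2 := by
    refine le_trans ?_ hleft
    gcongr
    nlinarith
  have hsq : (r + m₁) ^ 2 ≤ (r + (1 - r) / 6) ^ 2 := by gcongr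
  have hlower : 1 + r ^ 2 - 9 * P ≤ (1 - P) * (1 + r ^ 2 - m₂) := by
    nlinarith
  nlinarith

end Real

end IsIsotropic

end Isotropic

section SupportingHalfSpace

theorem interior_nonempty_of_addHaar_ne_zero {E : Type*} [NormedAddCommGroup E] [NormedSpace ℝ E]
    [FiniteDimensional ℝ E] [MeasurableSpace E] [BorelSpace E] (μ : Measure E)
    [μ.IsAddHaarMeasure] {A : Set E} (hA : Convex ℝ A) (hμA : μ A ≠ 0) :
    (interior A).Nonempty := by
  by_contra! hempty
  have hsub : A ⊆ frontier A := by
    rw [frontier, hempty, sdiff_empty]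
    exact subset_closure
  exact hμA (measure_mono_null hsub (hA.addHaar_frontier μ))

variable {E : Type*} [NormedAddCommGroup E] [InnerProductSpace ℝ E]

theorem exists_norm_eq_one_forall_inner_le [CompleteSpace E] {A : Set E} (hA : Convex ℝ A)
    (hA_int : (interior A).Nonempty) {x : E} (hx : x ∉ interior A) :
    ∃ u : E, ‖u‖ = 1 ∧ ∀ y ∈ A, ⟪u, y⟫ ≤ ⟪u, x⟫ := by
  obtain ⟨ℓ, hℓ₀, hℓ⟩ := geometric_hahn_banach_of_nonempty_interior_point hA hx hA_int
  obtain ⟨v, rfl⟩ := (InnerProductSpace.toDual ℝ E).surjective ℓ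
  have hv : v ≠ 0 := fun h ↦ hℓ₀ (by rw [h, map_zero])
  refine ⟨‖v‖⁻¹ • v, norm_smul_inv_norm hv, fun y hy ↦ ?_⟩
  rw [real_inner_smul_left, real_inner_smul_left]
  exact mul_le_mul_of_nonneg_left (hℓ y hy) (inv_nonneg.2 (norm_nonneg v))

theorem IsLogConcave.ae_lt_or_exists_inner_lt_imp_lt [FiniteDimensional ℝ E] [MeasurableSpace E]
    [BorelSpace E] (μ : Measure E) [μ.IsAddHaarMeasure] {f : E → ℝ} (hf : IsLogConcave f) {c : ℝ}
    (hc : 0 < c) {x : E} (hx : f x < c) :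
    (∀ᵐ y ∂μ, f y < c) ∨ ∃ u : E, ‖u‖ = 1 ∧ ∀ y, ⟪u, x⟫ < ⟪u, y⟫ → f y < c := by
  by_cases hnull : μ {y | c ≤ f y} = 0
  · exact .inl (by simpa [ae_iff] using hnull)
  have hconvex := hf.convex_superlevel hc
  have hx_mem : x ∉ {y | c ≤ f y} := hx.not_ge
  obtain ⟨u, hu, hsupport⟩ := exists_norm_eq_one_forall_inner_le hconvex
    (interior_nonempty_of_addHaar_ne_zero μ hconvex hnull) fun h ↦ hx_mem (interior_subset h)
  exact .inr ⟨u, hu, fun y hy ↦ not_le.1 fun h ↦ hy.not_ge (hsupport y h)⟩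

end SupportingHalfSpace

section LowerBound

theorem real_withDensity_le {α : Type*} [MeasurableSpace α] {μ : Measure α} {φ : α → ℝ≥0∞}
    {S : Set α} (hS : MeasurableSet S) (hμS : μ S ≠ ∞) {c : ℝ} (hc : 0 ≤ c)
    (hφ : ∀ᵐ x ∂μ, x ∈ S → φ x ≤ ENNReal.ofReal c) :
    (μ.withDensity φ).real S ≤ c * μ.real S := by
  have hle : μ.withDensity φ S ≤ ENNReal.ofReal c * μ S :=
    calc μ.withDensity φ S = ∫⁻ x in S, φ x ∂μ := withDensity_apply φ hS
      _ ≤ ∫⁻ _ in S, ENNReal.ofReal c ∂μ := setLIntegral_mono_ae' hS hφ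
      _ = ENNReal.ofReal c * μ S := setLIntegral_const S _
  refine (ENNReal.toReal_mono (ENNReal.mul_ne_top ENNReal.ofReal_ne_top hμS) hle).trans_eq ?_
  rw [ENNReal.toReal_mul, ENNReal.toReal_ofReal hc, Measure.real]

theorem isProbabilityMeasure_withDensity_ofReal {α : Type*} [MeasurableSpace α] {μ : Measure α}
    {f : α → ℝ} (hf : 0 ≤ f) (hf_int : ∫ x, f x ∂μ = 1) :
    IsProbabilityMeasure (μ.withDensity fun x ↦ ENNReal.ofReal (f x)) := by
  rw [isProbabilityMeasure_iff, withDensity_apply _ .univ, Measure.restrict_univ,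
    ← ofReal_integral_eq_lintegral_ofReal (.of_integral_ne_zero (by simp [hf_int]))
      (Eventually.of_forall hf), hf_int, ENNReal.ofReal_one]

variable {E : Type*} [NormedAddCommGroup E] [InnerProductSpace ℝ E] [MeasurableSpace E]
  [BorelSpace E]

theorem IsIsotropic.one_sub_sq_div_le_real_setOf_le_inner {ρ : Measure E}
    [IsProbabilityMeasure ρ] (hρ : IsIsotropic ρ) (hlc : IsLogConcaveMeasure ρ) {u : E}
    (hu : ‖u‖ = 1) {r : ℝ} (hr₀ : 0 ≤ r) (hr₁ : r < 1) :
    (1 - r) ^ 2 / 256 ≤ ρ.real {x | r ≤ ⟪u, x⟫} := by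
  have hmeas : Measurable fun x : E ↦ ⟪u, x⟫ :=
    Continuous.measurable (continuous_const.inner continuous_id)
  have hprob := Measure.isProbabilityMeasure_map hmeas.aemeasurable (μ := ρ)
  have hline := (hρ.map_inner hu).one_sub_sq_div_le_real_Ici
    (hlc.map (L := innerₗ E u) hmeas) hr₀ hr₁
  rwa [map_measureReal_apply hmeas measurableSet_Ici] at hline

variable [FiniteDimensional ℝ E]

theorem exists_pos_forall_isIsotropic_withDensity_real_lt (μ : Measure E)
    [IsFiniteMeasureOnCompacts μ] {ε : ℝ} (hε : 0 < ε) :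
    ∃ c > 0, ∀ φ : E → ℝ≥0∞, IsFiniteMeasure (μ.withDensity φ) → IsIsotropic (μ.withDensity φ) →
      ∀ ⦃S : Set E⦄, MeasurableSet S → (∀ᵐ x ∂μ, x ∈ S → φ x ≤ ENNReal.ofReal c) →
        (μ.withDensity φ).real S < ε := by
  obtain ⟨R, hR, hR_tail⟩ : ∃ R > 0, (finrank ℝ E : ℝ) / R ^ 2 < ε / 2 := by
    have hlim : Tendsto (fun R : ℝ ↦ (finrank ℝ E : ℝ) / R ^ 2) atTop (𝓝 0) :=
      (tendsto_pow_atTop two_ne_zero).const_div_atTop _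
    exact ((eventually_gt_atTop 0).and (hlim.eventually_lt_const (half_pos hε))).exists
  obtain ⟨c, hc, hc_ball⟩ : ∃ c > 0, c * μ.real (Metric.closedBall 0 R) < ε / 2 := by
    simpa only [mul_comm] using exists_pos_mul_lt (half_pos hε) (μ.real (Metric.closedBall 0 R))
  refine ⟨c, hc, fun φ _ hφ S hS hφ_le ↦ ?_⟩
  have hball : (μ.withDensity φ).real (S ∩ Metric.closedBall 0 R) ≤
      c * μ.real (Metric.closedBall 0 R) := by
    have hfinite : μ (Metric.closedBall 0 R) ≠ ∞ :=
      (isCompact_closedBall 0 R).measure_ne_top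
    refine (real_withDensity_le (hS.inter measurableSet_closedBall)
      (measure_ne_top_of_subset inter_subset_right hfinite) hc.le
      (hφ_le.mono fun x hx hxS ↦ hx hxS.1)).trans ?_
    gcongr
    exact inter_subset_right
  calc (μ.withDensity φ).real S
      ≤ (μ.withDensity φ).real (S ∩ Metric.closedBall 0 R ∪ {x | R ≤ ‖x‖}) :=
        measureReal_mono fun x hx ↦ (le_total ‖x‖ R).imp
          (fun h ↦ ⟨hx, mem_closedBall_zero_iff.2 h⟩) id
    _ ≤ c * μ.real (Metric.closedBall 0 R) + finrank ℝ E / R ^ 2 :=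
      (measureReal_union_le _ _).trans (add_le_add hball (hφ.measureReal_le_norm_le hR))
    _ < ε := by linarith

theorem logconcave_isotropic_lower_bound_general (μ : Measure E) [μ.IsAddHaarMeasure] {r : ℝ}
    (hr : r < 1) :
    ∃ c : ℝ, 0 < c ∧ ∀ f : E → ℝ, IsLogConcave f → ∫ x, f x ∂μ = 1 →
      IsIsotropic (μ.withDensity fun x ↦ ENNReal.ofReal (f x)) → ∀ x, ‖x‖ ≤ r → c ≤ f x := by
  obtain ⟨s, hrs, hs⟩ := exists_between hr
  have hε : 0 < (1 - s) ^ 2 / 256 := by have := sub_pos.2 hs; positivity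
  obtain ⟨c, hc, hsmall⟩ := exists_pos_forall_isIsotropic_withDensity_real_lt μ hε
  refine ⟨c, hc, fun f hf hf_int hiso x hx ↦ not_lt.1 fun hlt ↦ ?_⟩
  have hs₀ : 0 ≤ s := (norm_nonneg x).trans (hx.trans hrs.le)
  have hprob := isProbabilityMeasure_withDensity_ofReal hf.nonneg hf_int
  rcases hf.ae_lt_or_exists_inner_lt_imp_lt μ hc hlt with hae | ⟨u, hu, hhalf⟩
  · have htotal := hsmall _ inferInstance hiso .univ
      (hae.mono fun y hy _ ↦ ENNReal.ofReal_le_ofReal hy.le)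
    rw [probReal_univ] at htotal
    nlinarith
  · have hf_meas : AEMeasurable f μ :=
      (Integrable.of_integral_ne_zero (by simp [hf_int])).aemeasurable
    have hlc := (isLogConcaveMeasure_of_isAddHaarMeasure μ).withDensity_ofReal hf hf_meas
    have hux : ⟪u, x⟫ < s := by
      linarith [real_inner_le_norm u x, congrArg (· * ‖x‖) hu]
    refine (hiso.one_sub_sq_div_le_real_setOf_le_inner hlc hu hs₀ hs).not_gt
      (hsmall _ inferInstance hiso (measurableSet_le measurable_const ?_) ?_)
    · exact Continuous.measurable (continuous_const.inner continuous_id)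
    · exact Eventually.of_forall fun y hy ↦
        ENNReal.ofReal_le_ofReal (hhalf y (hux.trans_le hy)).le

theorem isIsotropic_of_integral_eq {ι : Type*} [Fintype ι] [DecidableEq ι]
    {ρ : Measure (EuclideanSpace ℝ ι)} [IsFiniteMeasure ρ] (hmean : ∀ i, ∫ x, x i ∂ρ = 0)
    (hcov : ∀ i j, ∫ x, x i * x j ∂ρ = if i = j then 1 else 0) : IsIsotropic ρ := by
  have hcoord : ∀ i, MemLp (fun x : EuclideanSpace ℝ ι ↦ x i) 2 ρ := fun i ↦ by
    refine (memLp_two_iff_integrable_sq (by fun_prop)).2 (.of_integral_ne_zero ?_)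
    simp [sq, hcov]
  have hinner : ∀ u x : EuclideanSpace ℝ ι, ⟪u, x⟫ = ∑ i, u i * x i := fun u x ↦ by
    simp [PiLp.inner_apply, mul_comm]
  refine ⟨.of_eval_piLp hcoord, fun u ↦ ?_, fun u ↦ ?_⟩
  · simp only [hinner]
    rw [integral_finsetSum _ fun i _ ↦ ((hcoord i).integrable one_le_two).const_mul (u i)]
    simp [integral_const_mul, hmean]
  · have hprod : ∀ i j, Integrable (fun x : EuclideanSpace ℝ ι ↦ u i * u j * (x i * x j)) ρ :=
      fun i j ↦ ((hcoord i).integrable_mul (hcoord j)).const_mul _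
    calc ∫ x, ⟪u, x⟫ ^ 2 ∂ρ = ∫ x, ∑ i, ∑ j, u i * u j * (x i * x j) ∂ρ := by
          simp only [hinner, sq, Finset.sum_mul_sum, mul_mul_mul_comm]
      _ = ∑ i, ∑ j, u i * u j * ∫ x, x i * x j ∂ρ := by
          rw [integral_finsetSum _ fun i _ ↦ integrable_finsetSum _ fun j _ ↦ hprod i j]
          simp only [integral_finsetSum _ fun j _ ↦ hprod _ j, integral_const_mul]
      _ = ‖u‖ ^ 2 := by rw [EuclideanSpace.real_norm_sq_eq]; simp [hcov, sq]

theorem integral_withDensity_ofReal {α : Type*} [MeasurableSpace α] {μ : Measure α}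
    {f : α → ℝ} (hf : 0 ≤ f) (hf_meas : AEMeasurable f μ) (g : α → ℝ) :
    ∫ x, g x ∂(μ.withDensity fun x ↦ ENNReal.ofReal (f x)) = ∫ x, f x * g x ∂μ := by
  rw [integral_withDensity_eq_integral_toReal_smul₀ hf_meas.ennreal_ofReal (by simp)]
  simp [ENNReal.toReal_ofReal (hf _)]

end LowerBound

/-- There exists `c > 0` depending only on `d` such that every upper semi-continuous
log-concave probability density on `ℝ^d` with mean `0` and identity covariance satisfies
`f x ≥ c` whenever `‖x‖ ≤ 1/4`. -/
theorem logconcave_isotropic_lower_bound (d : ℕ) :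
    ∃ c : ℝ, 0 < c ∧
      ∀ f : EuclideanSpace ℝ (Fin d) → ℝ,
        (∀ x, 0 ≤ f x) →
        UpperSemicontinuous f →
        (∀ x y : EuclideanSpace ℝ (Fin d), ∀ a b : ℝ, 0 ≤ a → 0 ≤ b → a + b = 1 →
          f x ^ a * f y ^ b ≤ f (a • x + b • y)) →
        (∫ x, f x = 1) →
        (∀ i, ∫ x, f x * x i = 0) →
        (∀ i j, ∫ x, f x * (x i * x j) = if i = j then (1 : ℝ) else 0) →
        ∀ x : EuclideanSpace ℝ (Fin d), ‖x‖ ≤ 1 / 4 → c ≤ f x := by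
  obtain ⟨c, hc, hbound⟩ := logconcave_isotropic_lower_bound_general
    (volume : Measure (EuclideanSpace ℝ (Fin d))) (r := 1 / 4) (by norm_num)
  refine ⟨c, hc, fun f hf husc hlc hf_int hmean hcov ↦
    hbound f ⟨hf, fun a b ha hb hab x y ↦ hlc x y a b ha.le hb.le hab⟩ hf_int ?_⟩
  have hprob := isProbabilityMeasure_withDensity_ofReal hf hf_int
  refine isIsotropic_of_integral_eq ?_ ?_ <;>
    simpa only [integral_withDensity_ofReal hf husc.measurable.aemeasurable]
end
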